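/- arXiv:1604.03089 — 4 statements merged into one kernel-verified Lean document; each statement's English description precedes it below -/
import Mathlib

section
/- Let Φ : M_n(ℂ) → M_n(ℂ) be a positive, unital, trace-preserving linear map, let σ ∈ M_n(ℂ) be positive semidefinite with Φ(σ) = σ, and let ρ ∈ M_n(ℂ) be positive semidefinite. Let α, z ∈ ℝ with 0 < α < 1 and α ≤ z ≤ 1. Then Tr( ( σ^{(1−α)/(2z)} Φ(ρ)^{α/z} σ^{(1−α)/(2z)} )^z ) ≥ Tr( ( σ^{(1−α)/(2z)} ρ^{α/z} σ^{(1−α)/(2z)} )^z ). (Since α − 1 < 0, this is exactly the monotonicity D_{α,z}(Φ(ρ)‖Φ(σ)) ≤ D_{α,z}(ρ‖σ) of the α-z-Rényi divergence D_{α,z}(ρ‖σ) := (α−1)^{−1} log Tr( ( σ^{(1−α)/(2z)} ρ^{α/z} σ^{(1−α)/(2z)} )^z ).) -/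
open Matrix
open scoped ComplexOrder

/-- Moore–Penrose power of a matrix: apply `x ↦ x ^ t` to the nonzero eigenvalues
(with `0 ^ t := 0`) via the continuous functional calculus. -/
noncomputable def mpow {n : ℕ} (A : Matrix (Fin n) (Fin n) ℂ) (t : ℝ) :
    Matrix (Fin n) (Fin n) ℂ :=
  cfc (fun x : ℝ => if x = 0 then 0 else x ^ t) A

/-!
Applying a positive unital map `Φ` to the spectral projections of `a` reduces Kadison's inequality
`Φ(a)² ≤ Φ(a²)` and Choi's inequality `Φ(a)⁻¹ ≤ Φ(a⁻¹)` to sums of squares weighted by positive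
elements. Through the integral representation of `x ↦ x ^ p`, Choi's inequality yields
`Φ(a ^ p) ≤ Φ(a) ^ p` for `p ∈ [0, 1]`.

If `Φ` preserves the trace and fixes a Hermitian `S`, then `Φ(S²) - S²` is positive with trace zero,
hence vanishes, and equality in Kadison's inequality forces `Φ(S X S) = S Φ(X) S` for all `X`.
Consequently
`Tr (S ρ^p S)^z = Tr Φ((S ρ^p S)^z) ≤ Tr (S Φ(ρ^p) S)^z ≤ Tr (S Φ(ρ)^p S)^z`.
-/

open MeasureTheory Set Filter Topology

section FiniteSpectrum

variable {A : Type*} [CStarAlgebra A] [FiniteDimensional ℂ A]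

lemma finite_real_spectrum (a : A) : (spectrum ℝ a).Finite := by
  nontriviality A
  have ha : IsIntegral ℝ a := Algebra.IsIntegral.isIntegral a
  refine ((minpoly ℝ a).rootSet_finite ℝ).subset fun x hx ↦ ?_
  have hroot := spectrum.subset_polynomial_aeval a (minpoly ℝ a) ⟨x, hx, rfl⟩
  rw [minpoly.aeval, spectrum.zero_eq, mem_singleton_iff] at hroot
  exact (minpoly ℝ a).mem_rootSet_of_ne (minpoly.ne_zero ha) |>.mpr (by simpa using hroot)

lemma continuousOn_real_spectrum (f : ℝ → ℝ) (a : A) : ContinuousOn f (spectrum ℝ a) :=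
  (finite_real_spectrum a).continuousOn f

lemma cfc_eq_sum_smul_cfc_single (f : ℝ → ℝ) (a : A) :
    cfc f a = ∑ x ∈ (finite_real_spectrum a).toFinset, f x • cfc (Pi.single x (1 : ℝ)) a := by
  simp_rw [← cfc_smul _ _ a (continuousOn_real_spectrum _ a)]
  rw [← cfc_sum _ a _ fun _ _ ↦ continuousOn_real_spectrum _ a]
  refine cfc_congr fun y hy ↦ ?_
  simp [Finset.sum_apply, Pi.single_apply, hy]

lemma cfc_integral_of_finiteDimensional {X : Type*} [MeasurableSpace X] {μ : Measure X}
    {f : X → ℝ → ℝ} {a : A} (hf : ∀ x ∈ spectrum ℝ a, Integrable (f · x) μ) :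
    Integrable (fun t ↦ cfc (f t) a) μ ∧ cfc (fun x ↦ ∫ t, f t x ∂μ) a = ∫ t, cfc (f t) a ∂μ := by
  have hterm : ∀ x ∈ (finite_real_spectrum a).toFinset,
      Integrable (fun t ↦ f t x • cfc (Pi.single x (1 : ℝ)) a) μ :=
    fun x hx ↦ (hf x ((finite_real_spectrum a).mem_toFinset.1 hx)).smul_const _
  rw [funext fun t ↦ cfc_eq_sum_smul_cfc_single (f t) a, cfc_eq_sum_smul_cfc_single _ a]
  refine ⟨integrable_finsetSum _ hterm, ?_⟩
  rw [integral_finsetSum _ hterm]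
  simp_rw [integral_smul_const]

lemma cfc_rpowIntegrand₀₁_eq (p t : ℝ) {a : A} (ha : IsSelfAdjoint a) :
    cfc (Real.rpowIntegrand₀₁ p t) a =
      t ^ p • (t⁻¹ • (1 : A) - cfc (fun x : ℝ ↦ (t + x)⁻¹) a) := by
  unfold Real.rpowIntegrand₀₁
  rw [cfc_const_mul _ _ a (continuousOn_real_spectrum _ a),
    cfc_sub _ _ a (continuousOn_real_spectrum _ a) (continuousOn_real_spectrum _ a),
    cfc_const _ a, Algebra.algebraMap_eq_smul_one]

lemma rpow_eq_integral_cfc [PartialOrder A] [StarOrderedRing A] {X : Type*} [MeasurableSpace X]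
    {μ : Measure X} {f : X → ℝ → ℝ} {p : ℝ}
    (hf : ∀ x : ℝ, 0 ≤ x → Integrable (f · x) μ ∧ x ^ p = ∫ t, f t x ∂μ) {a : A} (ha : 0 ≤ a) :
    Integrable (fun t ↦ cfc (f t) a) μ ∧ a ^ p = ∫ t, cfc (f t) a ∂μ := by
  have nonneg {x : ℝ} (hx : x ∈ spectrum ℝ a) : 0 ≤ x := spectrum_nonneg_of_nonneg ha hx
  obtain ⟨hint, hcfc⟩ := cfc_integral_of_finiteDimensional fun x hx ↦ (hf x (nonneg hx)).1
  rw [← hcfc, CFC.rpow_eq_cfc_real ha]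
  exact ⟨hint, cfc_congr fun x hx ↦ (hf x (nonneg hx)).2⟩

end FiniteSpectrum

section PositiveMap

variable {A B : Type*} [CStarAlgebra A] [PartialOrder A] [StarOrderedRing A]
  [FiniteDimensional ℂ A] [CStarAlgebra B] [PartialOrder B] [StarOrderedRing B]
  (Φ : A →ₚ[ℂ] B)

-- The expression is `∑ₓ cₓ Φ(eₓ) cₓ*` with `eₓ` the spectral projections of `a` and
-- `cₓ = f x - g x • b`.
lemma nonneg_map_cfc_quadratic (a : A) (f g : ℝ → ℝ) (b : B) :
    0 ≤ Φ (cfc (fun x ↦ f x * f x) a) - b * Φ (cfc (fun x ↦ f x * g x) a)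
      - Φ (cfc (fun x ↦ f x * g x) a) * star b + b * Φ (cfc (fun x ↦ g x * g x) a) * star b := by
  set q : ℝ → B := fun x ↦ Φ (cfc (Pi.single x (1 : ℝ)) a)
  have hq (x : ℝ) : 0 ≤ q x :=
    Φ.map_nonneg <| cfc_nonneg fun y _ ↦ by
      by_cases hxy : y = x <;> simp [hxy]
  have map_cfc (h : ℝ → ℝ) :
      Φ (cfc h a) = ∑ x ∈ (finite_real_spectrum a).toFinset, h x • q x := by
    rw [cfc_eq_sum_smul_cfc_single, map_sum]
    simp_rw [Φ.map_smul_of_tower, q]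
  have term (x : ℝ) : (f x • 1 - g x • b) * q x * star (f x • 1 - g x • b) =
      (f x * f x) • q x - b * ((f x * g x) • q x) - (f x * g x) • q x * star b
        + b * ((g x * g x) • q x) * star b := by
    simp only [star_sub, star_smul, star_one, star_trivial, sub_mul, mul_sub, smul_mul_assoc,
      mul_smul_comm, one_mul, mul_one]
    module
  simp only [map_cfc, Finset.mul_sum, Finset.sum_mul, ← Finset.sum_sub_distrib,
    ← Finset.sum_add_distrib, ← term]
  exact Finset.sum_nonneg fun x _ ↦ star_right_conjugate_nonneg (hq x) _

variable {Φ} (hΦ : Φ 1 = 1)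
include hΦ

lemma map_mul_map_self_le {a : A} (ha : IsSelfAdjoint a) : Φ a * Φ a ≤ Φ (a * a) := by
  have hsq : cfc (fun x : ℝ ↦ x * x) a = a * a := by
    rw [cfc_mul (fun x : ℝ ↦ x) (fun x ↦ x) a, cfc_id' ℝ a]
  have h := nonneg_map_cfc_quadratic Φ a (fun x ↦ x) (fun _ ↦ 1) (Φ a)
  simp only [mul_one, cfc_id' ℝ a, hsq, cfc_const_one ℝ a, hΦ,
    (ha.map Φ).star_eq, sub_add_cancel] at h
  exact sub_nonneg.1 h

lemma le_map_cfc_inv_of_mul_map_cfc_eq_one {a : A} (ha : IsSelfAdjoint a) {f : ℝ → ℝ}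
    (hf : ∀ x ∈ spectrum ℝ a, 0 < f x) {b : B} (hb : IsSelfAdjoint b)
    (hinv : b * Φ (cfc f a) = 1) : b ≤ Φ (cfc (fun x ↦ (f x)⁻¹) a) := by
  have h := nonneg_map_cfc_quadratic Φ a (fun x ↦ (√(f x))⁻¹) (fun x ↦ √(f x)) b
  have hinv_sqrt : cfc (fun x ↦ (√(f x))⁻¹ * (√(f x))⁻¹) a = cfc (fun x ↦ (f x)⁻¹) a :=
    cfc_congr fun x hx ↦ by rw [← mul_inv, Real.mul_self_sqrt (hf x hx).le]
  have hone : cfc (fun x ↦ (√(f x))⁻¹ * √(f x)) a = 1 := by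
    rw [← cfc_const_one ℝ a]
    exact cfc_congr fun x hx ↦ inv_mul_cancel₀ (Real.sqrt_pos.2 (hf x hx)).ne'
  have hsqrt : cfc (fun x ↦ √(f x) * √(f x)) a = cfc f a :=
    cfc_congr fun x hx ↦ Real.mul_self_sqrt (hf x hx).le
  rw [hinv_sqrt, hone, hsqrt, hΦ, hinv, hb.star_eq, mul_one, one_mul, sub_add_cancel] at h
  exact sub_nonneg.1 h

variable [FiniteDimensional ℂ B]

lemma cfc_add_inv_map_le {a : A} (ha : 0 ≤ a) {t : ℝ} (ht : 0 < t) :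
    cfc (fun x : ℝ ↦ (t + x)⁻¹) (Φ a) ≤ Φ (cfc (fun x : ℝ ↦ (t + x)⁻¹) a) := by
  have hb : 0 ≤ Φ a := Φ.map_nonneg ha
  have hshift : Φ (cfc (t + ·) a) = cfc (t + ·) (Φ a) := by
    rw [cfc_const_add t (fun x ↦ x) a, cfc_const_add t (fun x ↦ x) (Φ a), cfc_id' ℝ a,
      cfc_id' ℝ (Φ a), map_add, Algebra.algebraMap_eq_smul_one, Algebra.algebraMap_eq_smul_one,
      Φ.map_smul_of_tower, hΦ]
  refine le_map_cfc_inv_of_mul_map_cfc_eq_one hΦ ha.isSelfAdjoint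
    (fun x hx ↦ add_pos_of_pos_of_nonneg ht (spectrum_nonneg_of_nonneg ha hx)) .cfc ?_
  rw [hshift, ← cfc_mul _ _ _ (continuousOn_real_spectrum _ _) (continuousOn_real_spectrum _ _),
    ← cfc_const_one ℝ (Φ a)]
  exact cfc_congr fun x hx ↦
    inv_mul_cancel₀ (add_pos_of_pos_of_nonneg ht (spectrum_nonneg_of_nonneg hb hx)).ne'

lemma map_cfc_rpowIntegrand₀₁_le {a : A} (ha : 0 ≤ a) (p : ℝ) {t : ℝ} (ht : 0 < t) :
    Φ (cfc (Real.rpowIntegrand₀₁ p t) a) ≤ cfc (Real.rpowIntegrand₀₁ p t) (Φ a) := by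
  rw [cfc_rpowIntegrand₀₁_eq p t ha.isSelfAdjoint,
    cfc_rpowIntegrand₀₁_eq p t (Φ.map_nonneg ha).isSelfAdjoint, Φ.map_smul_of_tower, map_sub,
    Φ.map_smul_of_tower, hΦ]
  have := cfc_add_inv_map_le hΦ ha ht
  gcongr

theorem map_rpow_le_rpow_map {a : A} (ha : 0 ≤ a) {p : ℝ} (hp : p ∈ Icc 0 1) :
    Φ (a ^ p) ≤ Φ a ^ p := by
  have hb : 0 ≤ Φ a := Φ.map_nonneg ha
  rcases hp.1.eq_or_lt with rfl | hp0
  · rw [CFC.rpow_zero a, CFC.rpow_zero (Φ a), hΦ]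
  rcases hp.2.eq_or_lt with rfl | hp1
  · rw [CFC.rpow_one a, CFC.rpow_one (Φ a)]
  obtain ⟨μ, hμ⟩ := Real.exists_measure_rpow_eq_integral_rpowIntegrand₀₁ ⟨hp0, hp1⟩
  obtain ⟨hint, hrpow⟩ := rpow_eq_integral_cfc hμ ha
  obtain ⟨hint_map, hrpow_map⟩ := rpow_eq_integral_cfc hμ hb
  let L : A →L[ℂ] B := ⟨Φ.toLinearMap, map_continuous Φ⟩
  calc Φ (a ^ p) = ∫ t in Ioi 0, Φ (cfc (Real.rpowIntegrand₀₁ p t) a) ∂μ := by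
        rw [hrpow]; exact (L.integral_comp_comm hint).symm
    _ ≤ ∫ t in Ioi 0, cfc (Real.rpowIntegrand₀₁ p t) (Φ a) ∂μ :=
        setIntegral_mono_on (L.integrable_comp hint) hint_map measurableSet_Ioi
          fun t ht ↦ map_cfc_rpowIntegrand₀₁_le hΦ ha p ht
    _ = Φ a ^ p := hrpow_map.symm

end PositiveMap

lemma eq_zero_of_forall_nonneg_add_smul {E : Type*} [AddCommGroup E] [PartialOrder E]
    [IsOrderedAddMonoid E] [Module ℝ E] [PosSMulMono ℝ E] [TopologicalSpace E]
    [OrderClosedTopology E] [ContinuousAdd E] [ContinuousSMul ℝ E] {v w : E}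
    (h : ∀ t : ℝ, 0 ≤ v + t • w) : w = 0 := by
  have nonneg_of_forall {u : E} (hu : ∀ t : ℝ, 0 ≤ v + t • u) : 0 ≤ u := by
    have hlim : Tendsto (fun s : ℝ ↦ s • v + u) (𝓝[>] 0) (𝓝 u) := by
      have : Continuous fun s : ℝ ↦ s • v + u := by fun_prop
      simpa using (this.tendsto 0).mono_left nhdsWithin_le_nhds
    refine ge_of_tendsto hlim <| eventually_mem_nhdsWithin.mono fun s (hs : 0 < s) ↦ ?_
    calc 0 ≤ s • (v + s⁻¹ • u) := smul_nonneg hs.le (hu s⁻¹)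
      _ = s • v + u := by rw [smul_add, smul_inv_smul₀ hs.ne']
  refine le_antisymm (neg_nonneg.1 <| nonneg_of_forall fun t ↦ ?_) (nonneg_of_forall h)
  simpa using h (-t)

lemma two_nsmul_mul_mul_eq {R : Type*} [Ring R] (a x : R) :
    2 • (a * x * a) =
      (x * a + a * x) * a + a * (x * a + a * x) - (x * a ^ 2 + a ^ 2 * x) := by
  noncomm_ring

section MultiplicativeDomain

variable {A B : Type*} [CStarAlgebra A] [PartialOrder A] [StarOrderedRing A]
  [FiniteDimensional ℂ A] [CStarAlgebra B] [PartialOrder B] [StarOrderedRing B]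
  {Φ : A →ₚ[ℂ] B} (hΦ : Φ 1 = 1) {a : A} (ha : IsSelfAdjoint a) (hsq : Φ (a * a) = Φ a * Φ a)
include hΦ ha hsq

-- Kadison's inequality for `x + t • a` has no `t²` term, so its `t`-linear term must vanish.
lemma map_mul_add_mul_of_isSelfAdjoint {x : A} (hx : IsSelfAdjoint x) :
    Φ (x * a + a * x) = Φ x * Φ a + Φ a * Φ x := by
  refine sub_eq_zero.1 <|
    eq_zero_of_forall_nonneg_add_smul (v := Φ (x * x) - Φ x * Φ x) fun t ↦ ?_
  have hschwarz := sub_nonneg.2 <| map_mul_map_self_le hΦ (hx.add ((IsSelfAdjoint.all t).smul ha))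
  have hexpand : (x + t • a) * (x + t • a) = x * x + t • (x * a + a * x) + (t * t) • (a * a) := by
    simp only [add_mul, mul_add, smul_mul_assoc, mul_smul_comm]
    module
  convert hschwarz using 1
  simp only [hexpand, map_add, Φ.map_smul_of_tower, hsq, add_mul, mul_add, smul_mul_assoc,
    mul_smul_comm]
  module

lemma map_mul_add_mul (x : A) : Φ (x * a + a * x) = Φ x * Φ a + Φ a * Φ x := by
  have hre := map_mul_add_mul_of_isSelfAdjoint hΦ ha hsq (realPart x).2
  have him := map_mul_add_mul_of_isSelfAdjoint hΦ ha hsq (imaginaryPart x).2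
  rw [← realPart_add_I_smul_imaginaryPart x]
  simp only [map_add, map_smul, add_mul, mul_add, smul_mul_assoc, mul_smul_comm] at hre him ⊢
  linear_combination (norm := module) hre + Complex.I • him

lemma map_pow_of_map_mul_self (k : ℕ) : Φ (a ^ k) = Φ a ^ k := by
  induction k with
  | zero => simpa using hΦ
  | succ k ih =>
    have h := map_mul_add_mul hΦ ha hsq (a ^ k)
    rw [ih, ← pow_succ, ← pow_succ', ← pow_succ, ← pow_succ', ← two_smul ℂ, ← two_smul ℂ,
      map_smul] at h
    exact smul_right_injective _ (two_ne_zero (α := ℂ)) h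

lemma map_conj_of_map_mul_self (x : A) : Φ (a * x * a) = Φ a * Φ x * Φ a := by
  have hpow := map_pow_of_map_mul_self hΦ ha hsq
  have hsq' : Φ (a ^ 2 * a ^ 2) = Φ (a ^ 2) * Φ (a ^ 2) := by simp only [← pow_add, hpow]
  refine smul_right_injective B (two_ne_zero (α := ℂ)) ?_
  simp only [ofNat_smul_eq_nsmul]
  calc 2 • Φ (a * x * a)
      = Φ ((x * a + a * x) * a + a * (x * a + a * x)) - Φ (x * a ^ 2 + a ^ 2 * x) := by
        rw [← map_nsmul, two_nsmul_mul_mul_eq, map_sub]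
    _ = 2 • (Φ a * Φ x * Φ a) := by
        rw [map_mul_add_mul hΦ ha hsq, map_mul_add_mul hΦ ha hsq,
          map_mul_add_mul hΦ (ha.pow 2) hsq', hpow, two_nsmul_mul_mul_eq]

lemma map_cfc_of_map_mul_self [FiniteDimensional ℂ B] (f : ℝ → ℝ) :
    Φ (cfc f a) = cfc f (Φ a) := by
  set s := (finite_real_spectrum a).toFinset ∪ (finite_real_spectrum (Φ a)).toFinset with hs
  set q : Polynomial ℝ := Lagrange.interpolate s id f
  have hq {x : ℝ} (hx : x ∈ s) : f x = q.eval x :=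
    (Lagrange.eval_interpolate_at_node f (v := id) Function.injective_id.injOn hx).symm
  have hqa : cfc f a = cfc q.eval a := cfc_congr fun x hx ↦ hq (by simp [hs, hx])
  have hqb : cfc f (Φ a) = cfc q.eval (Φ a) := cfc_congr fun x hx ↦ hq (by simp [hs, hx])
  rw [hqa, hqb, cfc_polynomial q a, cfc_polynomial q (Φ a) (ha.map Φ),
    Polynomial.aeval_eq_sum_range, Polynomial.aeval_eq_sum_range, map_sum]
  simp_rw [Φ.map_smul_of_tower, map_pow_of_map_mul_self hΦ ha hsq]

theorem map_rpow_conj_rpow_le [FiniteDimensional ℂ B] {x : A} (hx : 0 ≤ x) {p z : ℝ}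
    (hp : p ∈ Icc 0 1) (hz : z ∈ Icc 0 1) :
    Φ ((a * x ^ p * a) ^ z) ≤ (Φ a * Φ x ^ p * Φ a) ^ z :=
  calc Φ ((a * x ^ p * a) ^ z) ≤ Φ (a * x ^ p * a) ^ z :=
        map_rpow_le_rpow_map hΦ (ha.conjugate_nonneg CFC.rpow_nonneg) hz
    _ = (Φ a * Φ (x ^ p) * Φ a) ^ z := by rw [map_conj_of_map_mul_self hΦ ha hsq]
    _ ≤ (Φ a * Φ x ^ p * Φ a) ^ z := CFC.rpow_le_rpow hz <|
        (ha.map Φ).conjugate_le_conjugate (map_rpow_le_rpow_map hΦ hx hp)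

end MultiplicativeDomain

section PositiveMatrixMap

open scoped MatrixOrder Matrix.Norms.L2Operator

section TracePreserving

variable {ι : Type*} [Fintype ι] [DecidableEq ι] {Φ : Matrix ι ι ℂ →ₚ[ℂ] Matrix ι ι ℂ}
  (hΦ : Φ 1 = 1) (htr : ∀ X, (Φ X).trace = X.trace) {S : Matrix ι ι ℂ} (hS : S.IsHermitian)
  (hfix : Φ S = S)
include hΦ htr hS hfix

lemma map_mul_self_of_map_eq_self : Φ (S * S) = Φ S * Φ S := by
  have hschwarz := map_mul_map_self_le hΦ hS.isSelfAdjoint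
  rw [Matrix.le_iff] at hschwarz
  exact sub_eq_zero.1 <| hschwarz.trace_eq_zero_iff.1 <| by rw [trace_sub, htr, hfix, sub_self]

lemma map_cfc_of_map_eq_self (f : ℝ → ℝ) : Φ (cfc f S) = cfc f S := by
  rw [map_cfc_of_map_mul_self hΦ hS.isSelfAdjoint (map_mul_self_of_map_eq_self hΦ htr hS hfix),
    hfix]

end TracePreserving

variable {n : ℕ}

lemma mpow_eq_rpow {A : Matrix (Fin n) (Fin n) ℂ} (hA : A.PosSemidef) {t : ℝ} (ht : 0 < t) :
    mpow A t = A ^ t := by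
  rw [CFC.rpow_eq_cfc_real hA.nonneg]
  refine cfc_congr fun x _ ↦ ?_
  split_ifs with hx
  · rw [hx, Real.zero_rpow ht.ne']
  · rfl

lemma mpow_conj_mpow {A S : Matrix (Fin n) (Fin n) ℂ} (hA : A.PosSemidef) (hS : S.IsHermitian)
    {p z : ℝ} (hp : 0 < p) (hz : 0 < z) :
    mpow (S * mpow A p * S) z = (S * A ^ p * S) ^ z := by
  have hpow : 0 ≤ A ^ p := CFC.rpow_nonneg
  rw [mpow_eq_rpow hA hp, mpow_eq_rpow (hS.isSelfAdjoint.conjugate_nonneg hpow).posSemidef hz]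

theorem stmt5_general {ι : Type*} [Fintype ι] [DecidableEq ι]
    {Φ : Matrix ι ι ℂ →ₚ[ℂ] Matrix ι ι ℂ} (hΦ : Φ 1 = 1) (htr : ∀ X, (Φ X).trace = X.trace)
    {S : Matrix ι ι ℂ} (hS : S.IsHermitian) (hfix : Φ S = S)
    {ρ : Matrix ι ι ℂ} (hρ : ρ.PosSemidef) {p z : ℝ} (hp : p ∈ Icc 0 1) (hz : z ∈ Icc 0 1) :
    (trace ((S * ρ ^ p * S) ^ z)).re ≤ (trace ((S * Φ ρ ^ p * S) ^ z)).re := by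
  have hle : Φ ((S * ρ ^ p * S) ^ z) ≤ (S * Φ ρ ^ p * S) ^ z := by
    simpa only [hfix] using map_rpow_conj_rpow_le hΦ hS.isSelfAdjoint
      (map_mul_self_of_map_eq_self hΦ htr hS hfix) hρ.nonneg hp hz
  rw [← htr]
  exact (Complex.le_def.1 ((tracePositiveLinearMap ι ℂ ℂ).monotone' hle)).1

end PositiveMatrixMap

/-- monotonicity of the α-z-Rényi trace functional (`0 < α < 1`,
`α ≤ z ≤ 1`) under a positive unital trace-preserving map fixing `σ`:
`Tr((σ^{(1−α)/(2z)} Φ(ρ)^{α/z} σ^{(1−α)/(2z)})^z) ≥ Tr((σ^{(1−α)/(2z)} ρ^{α/z} σ^{(1−α)/(2z)})^z)`. -/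
theorem stmt5 {n : ℕ}
    (Φ : Matrix (Fin n) (Fin n) ℂ →ₗ[ℂ] Matrix (Fin n) (Fin n) ℂ)
    (hΦpos : ∀ X, X.PosSemidef → (Φ X).PosSemidef)
    (hΦunital : Φ 1 = 1) (hΦtr : ∀ X, (Φ X).trace = X.trace)
    (σ : Matrix (Fin n) (Fin n) ℂ) (hσ : σ.PosSemidef) (hfix : Φ σ = σ)
    (ρ : Matrix (Fin n) (Fin n) ℂ) (hρ : ρ.PosSemidef)
    (α z : ℝ) (hα0 : 0 < α) (hα1 : α < 1) (hαz : α ≤ z) (hz1 : z ≤ 1) :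
    (Matrix.trace (mpow (mpow σ ((1 - α) / (2 * z)) * mpow ρ (α / z) *
        mpow σ ((1 - α) / (2 * z))) z)).re
      ≤ (Matrix.trace (mpow (mpow σ ((1 - α) / (2 * z)) * mpow (Φ ρ) (α / z) *
          mpow σ ((1 - α) / (2 * z))) z)).re := by
  open scoped MatrixOrder Matrix.Norms.L2Operator in
  have hz : 0 < z := hα0.trans_le hαz
  let Ψ : Matrix (Fin n) (Fin n) ℂ →ₚ[ℂ] Matrix (Fin n) (Fin n) ℂ :=
    .mk₀ Φ fun X hX ↦ (hΦpos X hX.posSemidef).nonneg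
  have hpow : (mpow σ ((1 - α) / (2 * z))).IsHermitian := IsSelfAdjoint.cfc
  have hpow_fix : Ψ (mpow σ ((1 - α) / (2 * z))) = mpow σ ((1 - α) / (2 * z)) :=
    map_cfc_of_map_eq_self (Φ := Ψ) hΦunital hΦtr hσ.isHermitian hfix _
  rw [mpow_conj_mpow hρ hpow (div_pos hα0 hz) hz,
    mpow_conj_mpow (hΦpos ρ hρ) hpow (div_pos hα0 hz) hz]
  exact stmt5_general (Φ := Ψ) hΦunital hΦtr hpow hpow_fix hρ
    ⟨(div_pos hα0 hz).le, div_le_one_of_le₀ hαz hz.le⟩ ⟨hz.le, hz1⟩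
end

section
/- Let f : (0,∞) → ℝ satisfy f(1) = 0 and admit a representation f(x) = d·(x−1) + c·(x−1)² + ∫_{[0,∞)} (x−1)²/(x+s) dλ(s) for all x ∈ (0,∞), where d ∈ ℝ, c ≥ 0 and λ is a positive measure on [0,∞) with ∫ (1+s)^{−1} dλ(s) < ∞ (every operator convex f with f(1) = 0 has such a representation, and then f''(1)/2 = c + ∫ (1+s)^{−1} dλ(s)). Let ρ, σ ∈ M_n(ℂ) be density matrices (positive semidefinite with trace 1). Then ( c + ∫_{[0,∞)} (1+s)^{−1} dλ(s) ) · ‖ρ − σ‖₁² ≤ S_f^{pr}(ρ‖σ), where ‖A‖₁ := Tr √(AᴴA) is the trace norm and S_f^{pr}(ρ‖σ) is the supremum, valued in (−∞,+∞], over all projective measurements (P_x)_{x∈X} on ℂ^n, of Σ_x P_f( Tr(ρP_x), Tr(σP_x) ). -/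
open Matrix MeasureTheory
open scoped ComplexOrder

/-- The trace norm `‖A‖₁ = Tr √(AᴴA)`. -/
noncomputable def traceNorm {n : ℕ} (A : Matrix (Fin n) (Fin n) ℂ) : ℝ :=
  (Matrix.trace (mpow (Aᴴ * A) (1/2))).re

/-- A projective measurement on `ℂ^n`: a finite family of mutually orthogonal
orthogonal projections summing to the identity. -/
def IsProjMeas {n k : ℕ} (P : Fin k → Matrix (Fin n) (Fin n) ℂ) : Prop :=
  (∀ x, (P x).IsHermitian) ∧ (∀ x, P x * P x = P x) ∧
    (∀ x y, x ≠ y → P x * P y = 0) ∧ ∑ x, P x = 1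

/-- The extended-real-valued perspective of `f : (0,∞) → ℝ` on `[0,∞)²`:
`P_f(p,q) = q·f(p/q)` for `p,q > 0`, `P_f(0,q) = q·f(0⁺)`, `P_f(p,0) = p·f'(∞)`,
`P_f(0,0) = 0`, where `f(0⁺)` and `f'(∞)` are the limits at `0⁺` and `∞`
(realized here as `limsup`s, which agree with the limits whenever they exist). -/
noncomputable def persp (f : ℝ → ℝ) (p q : ℝ) : EReal :=
  if p = 0 ∧ q = 0 then 0
  else if q = 0 then (p : EReal) *
    Filter.limsup (fun x : ℝ => ((f x / x : ℝ) : EReal)) Filter.atTop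
  else if p = 0 then (q : EReal) *
    Filter.limsup (fun x : ℝ => ((f x : ℝ) : EReal)) (nhdsWithin 0 (Set.Ioi 0))
  else ((q * f (p / q) : ℝ) : EReal)

/-!
Let `P` be the projection onto the positive eigenspaces of `ρ - σ`. The two-outcome measurement
`(P, 1 - P)` turns `‖ρ - σ‖₁` into the `ℓ¹` distance `δ` of the measured distributions `p` and `q`,
which reduces the claim to classical distributions. There, `u² / a ≥ 2 u m - m² a` with
`u = |x - 1|`, `a = x + s` and `m = δ / (1 + s)`, integrated over `s`, gives a lower bound
`f x ≥ b (x - 1) + K (2 δ |x - 1| - δ²)` with `K = c + ∫ (1 + s)⁻¹ dλ`. Its perspective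
`b (p - q) + K (2 δ |p - q| - δ² q)` is continuous up to the boundary of the quadrant, and summing
it over the outcomes leaves exactly `K δ²`.
-/

section IntegralRepresentation

variable {lam : Measure ℝ}

lemma two_mul_mul_sub_sq_mul_le_sq_div {a : ℝ} (ha : 0 < a) (u m : ℝ) :
    2 * u * m - m ^ 2 * a ≤ u ^ 2 / a := by
  rw [le_div_iff₀ ha]
  nlinarith [sq_nonneg (u - m * a)]

lemma integrable_inv_one_add_pow_two (hnonneg : ∀ᵐ s ∂lam, 0 ≤ s)
    (hint : Integrable (fun s : ℝ => (1 + s)⁻¹) lam) :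
    Integrable (fun s : ℝ => (1 + s)⁻¹ ^ 2) lam := by
  refine hint.mono' (by fun_prop) ?_
  filter_upwards [hnonneg] with s hs
  have hinv : (1 + s)⁻¹ ≤ 1 := inv_le_one_of_one_le₀ (by linarith)
  rw [Real.norm_of_nonneg (by positivity)]
  exact pow_le_of_le_one (by positivity) hinv two_ne_zero

lemma integrable_inv_add (hnonneg : ∀ᵐ s ∂lam, 0 ≤ s)
    (hint : Integrable (fun s : ℝ => (1 + s)⁻¹) lam) {x : ℝ} (hx : 0 < x) :
    Integrable (fun s : ℝ => (x + s)⁻¹) lam := by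
  refine (hint.const_mul (1 + x⁻¹)).mono' (by fun_prop) ?_
  filter_upwards [hnonneg] with s hs
  have hgap : (1 + x⁻¹) * (1 + s)⁻¹ - (x + s)⁻¹ = (x + s / x) * ((1 + s)⁻¹ * (x + s)⁻¹) := by
    field_simp
    ring
  rw [Real.norm_of_nonneg (by positivity), ← sub_nonneg, hgap]
  positivity

lemma le_integral_sq_sub_one_div_add (hnonneg : ∀ᵐ s ∂lam, 0 ≤ s)
    (hint : Integrable (fun s : ℝ => (1 + s)⁻¹) lam) (δ : ℝ) {x : ℝ} (hx : 0 < x) :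
    (2 * δ * |x - 1| - δ ^ 2) * (∫ s, (1 + s)⁻¹ ∂lam)
        - δ ^ 2 * (x - 1) * (∫ s, (1 + s)⁻¹ ^ 2 ∂lam)
      ≤ ∫ s, (x - 1) ^ 2 / (x + s) ∂lam := by
  have hsq := integrable_inv_one_add_pow_two hnonneg hint
  rw [← integral_const_mul, ← integral_const_mul,
    ← integral_sub (hint.const_mul _) (hsq.const_mul _)]
  refine integral_mono_ae ((hint.const_mul _).sub (hsq.const_mul _))
    ((integrable_inv_add hnonneg hint hx).const_mul _) ?_
  filter_upwards [hnonneg] with s hs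
  calc (2 * δ * |x - 1| - δ ^ 2) * (1 + s)⁻¹ - δ ^ 2 * (x - 1) * (1 + s)⁻¹ ^ 2
      = 2 * |x - 1| * (δ * (1 + s)⁻¹) - (δ * (1 + s)⁻¹) ^ 2 * (x + s) := by
        field_simp
        ring
    _ ≤ |x - 1| ^ 2 / (x + s) := two_mul_mul_sub_sq_mul_le_sq_div (by positivity) _ _
    _ = (x - 1) ^ 2 / (x + s) := by rw [sq_abs]

lemma exists_abs_sub_one_minorant_of_integral_rep {f : ℝ → ℝ} {d c : ℝ} (hc : 0 ≤ c)
    (hnonneg : ∀ᵐ s ∂lam, 0 ≤ s) (hint : Integrable (fun s : ℝ => (1 + s)⁻¹) lam)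
    (hrep : ∀ x : ℝ, 0 < x →
      f x = d * (x - 1) + c * (x - 1) ^ 2 + ∫ s, (x - 1) ^ 2 / (x + s) ∂lam) (δ : ℝ) :
    ∃ b : ℝ, ∀ x, 0 < x →
      b * (x - 1) + (c + ∫ s, (1 + s)⁻¹ ∂lam) * (2 * δ * |x - 1| - δ ^ 2) ≤ f x := by
  refine ⟨d - δ ^ 2 * ∫ s, (1 + s)⁻¹ ^ 2 ∂lam, fun x hx => ?_⟩
  have hquad : c * (2 * δ * |x - 1| - δ ^ 2) ≤ c * (x - 1) ^ 2 := by
    gcongr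
    nlinarith [sq_nonneg (|x - 1| - δ), sq_abs (x - 1)]
  rw [hrep x hx]
  linarith [le_integral_sq_sub_one_div_add hnonneg hint δ hx]

end IntegralRepresentation

section Perspective

open Filter Topology

variable {f : ℝ → ℝ} {p q : ℝ}

lemma coe_le_coe_mul_limsup {ι : Type*} {l : Filter ι} [l.NeBot] {u v : ι → ℝ} {a b : ℝ}
    (ha : 0 ≤ a) (hu : Tendsto u l (𝓝 b)) (huv : ∀ᶠ i in l, u i ≤ a * v i) :
    (b : EReal) ≤ a * limsup (fun i => (v i : EReal)) l := by
  rw [← EReal.limsup_const_mul_of_nonneg_of_ne_top (EReal.coe_nonneg.2 ha) (EReal.coe_ne_top a),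
    ← ((continuous_coe_real_ereal.tendsto b).comp hu).limsup_eq]
  refine limsup_le_limsup ?_
  filter_upwards [huv] with i hi
  rw [Function.comp_apply, ← EReal.coe_mul]
  exact EReal.coe_le_coe hi

lemma coe_le_persp_of_continuous {G : ℝ → ℝ → ℝ} (hG : Continuous fun z : ℝ × ℝ => G z.1 z.2)
    (hGf : ∀ p q : ℝ, 0 < p → 0 < q → G p q ≤ q * f (p / q))
    (hp : 0 ≤ p) (hq : 0 ≤ q) : (G p q : EReal) ≤ persp f p q := by
  rcases hp.eq_or_lt with rfl | hp <;> rcases hq.eq_or_lt with rfl | hq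
  · have hdiag : Tendsto (fun t => G t t) (𝓝[>] 0) (𝓝 (G 0 0)) :=
      (hG.comp (by fun_prop : Continuous fun t : ℝ => (t, t))).continuousWithinAt
    have hlin : Tendsto (fun t => t * f 1) (𝓝[>] 0) (𝓝 (0 * f 1)) :=
      (continuous_mul_const (f 1)).continuousWithinAt
    have hG0 : G 0 0 ≤ 0 * f 1 := by
      refine le_of_tendsto_of_tendsto hdiag hlin ?_
      filter_upwards [self_mem_nhdsWithin] with t (ht : 0 < t)
      simpa [ht.ne'] using hGf t t ht ht
    simpa [persp] using hG0
  · have hlim : Tendsto (fun x => G (q * x) q) (𝓝[>] 0) (𝓝 (G 0 q)) := by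
      have hcont : Continuous fun x => G (q * x) q :=
        hG.comp (by fun_prop : Continuous fun x : ℝ => (q * x, q))
      simpa using (hcont.tendsto 0).mono_left nhdsWithin_le_nhds
    simp only [persp, hq.ne', and_false, if_false, if_true]
    refine coe_le_coe_mul_limsup hq.le hlim ?_
    filter_upwards [self_mem_nhdsWithin] with x (hx : 0 < x)
    simpa [hq.ne'] using hGf (q * x) q (by positivity) hq
  · have hlim : Tendsto (fun x => G p (p * x⁻¹)) atTop (𝓝 (G p 0)) := by
      have hcont : Continuous fun y => G p (p * y) :=
        hG.comp (by fun_prop : Continuous fun y : ℝ => (p, p * y))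
      simpa [Function.comp_def] using (hcont.tendsto 0).comp tendsto_inv_atTop_zero
    simp only [persp, hp.ne', false_and, if_false, if_true]
    refine coe_le_coe_mul_limsup hp.le hlim ?_
    filter_upwards [eventually_gt_atTop 0] with x hx
    calc G p (p * x⁻¹) ≤ p * x⁻¹ * f (p / (p * x⁻¹)) := hGf p _ hp (by positivity)
      _ = p * (f x / x) := by
        rw [show p / (p * x⁻¹) = x by field_simp]
        ring
  · simpa only [persp, hp.ne', hq.ne', false_and, if_false] using EReal.coe_le_coe (hGf p q hp hq)

lemma coe_le_persp_of_abs_sub_one_minorant {b K δ : ℝ}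
    (hf : ∀ x, 0 < x → b * (x - 1) + K * (2 * δ * |x - 1| - δ ^ 2) ≤ f x)
    (hp : 0 ≤ p) (hq : 0 ≤ q) :
    ((b * (p - q) + K * (2 * δ * |p - q| - δ ^ 2 * q) : ℝ) : EReal) ≤ persp f p q := by
  refine coe_le_persp_of_continuous
    (G := fun p q => b * (p - q) + K * (2 * δ * |p - q| - δ ^ 2 * q))
    (by fun_prop) (fun p q hp hq => ?_) hp hq
  have habs : |p - q| = q * |p / q - 1| := by
    calc |p - q| = |q * (p / q - 1)| := by field_simp
      _ = q * |p / q - 1| := by rw [abs_mul, abs_of_pos hq]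
  calc b * (p - q) + K * (2 * δ * |p - q| - δ ^ 2 * q)
      = q * (b * (p / q - 1) + K * (2 * δ * |p / q - 1| - δ ^ 2)) := by
        rw [habs]
        field_simp
    _ ≤ q * f (p / q) := by
        gcongr
        exact hf _ (by positivity)

lemma mul_sq_sum_abs_sub_le_sum_persp {ι : Type*} [Fintype ι] {K : ℝ}
    (hf : ∀ δ : ℝ, ∃ b : ℝ, ∀ x, 0 < x → b * (x - 1) + K * (2 * δ * |x - 1| - δ ^ 2) ≤ f x)
    {p q : ι → ℝ} (hp : ∀ i, 0 ≤ p i) (hq : ∀ i, 0 ≤ q i)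
    (hp1 : ∑ i, p i = 1) (hq1 : ∑ i, q i = 1) :
    ((K * (∑ i, |p i - q i|) ^ 2 : ℝ) : EReal) ≤ ∑ i, persp f (p i) (q i) := by
  set δ := ∑ i, |p i - q i| with hδ
  obtain ⟨b, hb⟩ := hf δ
  have hsum : K * δ ^ 2 =
      ∑ i, (b * (p i - q i) + K * (2 * δ * |p i - q i| - δ ^ 2 * q i)) := by
    simp only [Finset.sum_add_distrib, ← Finset.mul_sum, Finset.sum_sub_distrib, hp1, hq1, ← hδ]
    ring
  calc ((K * δ ^ 2 : ℝ) : EReal)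
      = ∑ i, ((b * (p i - q i) + K * (2 * δ * |p i - q i| - δ ^ 2 * q i) : ℝ) : EReal) := by
        rw [hsum]
        exact map_sum (⟨⟨Real.toEReal, EReal.coe_zero⟩, EReal.coe_add⟩ : ℝ →+ EReal) _ _
    _ ≤ ∑ i, persp f (p i) (q i) := Finset.sum_le_sum fun i _ =>
        coe_le_persp_of_abs_sub_one_minorant hb (hp i) (hq i)

end Perspective

section SpectralProjection

variable {m : Type*} [Fintype m] [DecidableEq m] {A : Matrix m m ℂ}

lemma continuousOn_spectrum_real (A : Matrix m m ℂ) (g : ℝ → ℝ) :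
    ContinuousOn g (spectrum ℝ A) :=
  A.finite_real_spectrum.continuousOn g

/-- The spectral projection of a Hermitian matrix onto the sum of its eigenspaces for positive
eigenvalues. The functional calculus makes it `0` when the matrix is not Hermitian. -/
noncomputable def posSpectralProj (A : Matrix m m ℂ) : Matrix m m ℂ :=
  cfc (fun x : ℝ => if 0 < x then (1 : ℝ) else 0) A

lemma isStarProjection_posSpectralProj (A : Matrix m m ℂ) :
    IsStarProjection (posSpectralProj A) where
  isIdempotentElem := by
    rw [IsIdempotentElem, posSpectralProj, ← cfc_mul _ _ A (continuousOn_spectrum_real A _)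
      (continuousOn_spectrum_real A _)]
    simp only [mul_ite, mul_one, mul_zero, ← ite_and, and_self]
  isSelfAdjoint := cfc_predicate _ A

lemma mul_posSpectralProj (hA : A.IsHermitian) :
    A * posSpectralProj A = cfc (fun x : ℝ => x⁺) A := by
  have hsa : IsSelfAdjoint A := hA
  have hcont := continuousOn_spectrum_real A
  have hpos (x : ℝ) : x⁺ = x * if 0 < x then 1 else 0 := by
    split_ifs with hx
    · simp [hx.le]
    · simpa using hx
  simp only [hpos]
  rw [cfc_mul _ _ A (hcont _) (hcont _), cfc_id' ℝ A, posSpectralProj]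

lemma mul_one_sub_posSpectralProj (hA : A.IsHermitian) :
    A * (1 - posSpectralProj A) = -cfc (fun x : ℝ => x⁻) A := by
  have hsa : IsSelfAdjoint A := hA
  have hcont := continuousOn_spectrum_real A
  have hneg (x : ℝ) : x⁻ = x⁺ - x := by linarith [posPart_sub_negPart x]
  simp only [hneg]
  rw [cfc_sub _ _ A (hcont _) (hcont _), cfc_id' ℝ A, ← mul_posSpectralProj hA, mul_sub, mul_one,
    neg_sub]

open scoped MatrixOrder in
lemma re_trace_cfc_nonneg (A : Matrix m m ℂ) {g : ℝ → ℝ}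
    (hg : ∀ x ∈ spectrum ℝ A, 0 ≤ g x) : 0 ≤ (cfc g A).trace.re := by
  have hpsd : (cfc g A).PosSemidef := Matrix.nonneg_iff_posSemidef.1 (cfc_nonneg hg)
  exact (Complex.nonneg_iff.1 hpsd.trace_nonneg).1

end SpectralProjection

section ProjectiveMeasurement

variable {n k : ℕ} {A : Matrix (Fin n) (Fin n) ℂ}

lemma IsProjMeas.re_trace_mul_nonneg {P : Fin k → Matrix (Fin n) (Fin n) ℂ} (hP : IsProjMeas P)
    (hA : A.PosSemidef) (x : Fin k) : 0 ≤ (A * P x).trace.re := by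
  obtain ⟨hherm, hidem, -, -⟩ := hP
  have htrace : ((P x)ᴴ * A * P x).trace = (A * P x).trace := by
    rw [(hherm x).eq, Matrix.mul_assoc, Matrix.trace_mul_comm, Matrix.mul_assoc, hidem x]
  rw [← htrace]
  exact (Complex.nonneg_iff.1 (hA.conjTranspose_mul_mul_same (P x)).trace_nonneg).1

lemma IsProjMeas.sum_re_trace_mul {P : Fin k → Matrix (Fin n) (Fin n) ℂ} (hP : IsProjMeas P)
    (A : Matrix (Fin n) (Fin n) ℂ) : ∑ x, (A * P x).trace.re = A.trace.re := by
  obtain ⟨-, -, -, hsum⟩ := hP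
  rw [← Complex.re_sum, ← Matrix.trace_sum, ← Finset.mul_sum, hsum, mul_one]

lemma isProjMeas_pair {P : Matrix (Fin n) (Fin n) ℂ} (hP : IsStarProjection P) :
    IsProjMeas ![P, 1 - P] := by
  refine ⟨?_, ?_, ?_, by simp [Fin.sum_univ_two]⟩
  · exact Fin.forall_fin_two.2 ⟨hP.isSelfAdjoint, hP.one_sub.isSelfAdjoint⟩
  · exact Fin.forall_fin_two.2 ⟨hP.isIdempotentElem, hP.one_sub.isIdempotentElem⟩
  · simp [Fin.forall_fin_two, hP.mul_one_sub_self, hP.one_sub_mul_self]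

lemma mpow_conjTranspose_mul_self_one_half (hA : A.IsHermitian) :
    mpow (Aᴴ * A) (1 / 2) = cfc (fun x : ℝ => |x|) A := by
  have hsa : IsSelfAdjoint A := hA
  have hsq : Aᴴ * A = cfc (fun x : ℝ => x ^ 2) A := by
    rw [cfc_pow_id (R := ℝ) A 2, hA.eq, pow_two]
  have hroot (x : ℝ) : (if x ^ 2 = 0 then 0 else (x ^ 2) ^ (1 / 2 : ℝ)) = |x| := by
    rw [← Real.sqrt_eq_rpow, Real.sqrt_sq_eq_abs]
    simp +contextual
  rw [mpow, hsq, ← cfc_comp' _ _ A ((A.finite_real_spectrum.image _).continuousOn _)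
    (continuousOn_spectrum_real A _)]
  simp only [hroot]

lemma traceNorm_eq_trace_posPart_add_trace_negPart (hA : A.IsHermitian) :
    traceNorm A = (cfc (fun x : ℝ => x⁺) A).trace.re + (cfc (fun x : ℝ => x⁻) A).trace.re := by
  rw [traceNorm, mpow_conjTranspose_mul_self_one_half hA, ← Complex.add_re, ← Matrix.trace_add,
    ← cfc_add A _ _ (continuousOn_spectrum_real A _) (continuousOn_spectrum_real A _)]
  simp only [posPart_add_negPart]

lemma exists_isProjMeas_traceNorm_eq (hA : A.IsHermitian) :
    ∃ (k : ℕ) (P : Fin k → Matrix (Fin n) (Fin n) ℂ),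
      IsProjMeas P ∧ traceNorm A = ∑ x, |(A * P x).trace.re| := by
  refine ⟨2, ![posSpectralProj A, 1 - posSpectralProj A],
    isProjMeas_pair (isStarProjection_posSpectralProj A), ?_⟩
  simp only [Fin.sum_univ_two, Matrix.cons_val_zero, Matrix.cons_val_one, mul_posSpectralProj hA,
    mul_one_sub_posSpectralProj hA, Matrix.trace_neg, Complex.neg_re, abs_neg]
  rw [traceNorm_eq_trace_posPart_add_trace_negPart hA,
    abs_of_nonneg (re_trace_cfc_nonneg A fun x _ => posPart_nonneg x),
    abs_of_nonneg (re_trace_cfc_nonneg A fun x _ => negPart_nonneg x)]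

end ProjectiveMeasurement

/-- Pinsker-type inequality for the projectively measured `f`-divergence:
if `f(1) = 0` and `f(x) = d(x−1) + c(x−1)² + ∫ (x−1)²/(x+s) dλ(s)` with `c ≥ 0` and a
positive measure `λ` on `[0,∞)` with `∫ (1+s)⁻¹ dλ < ∞`, then for density matrices
`ρ, σ`, `(c + ∫ (1+s)⁻¹ dλ)·‖ρ − σ‖₁² ≤ S_f^{pr}(ρ‖σ)`. -/
theorem stmt8 {n : ℕ} (f : ℝ → ℝ) (hf1 : f 1 = 0) (d c : ℝ) (hc : 0 ≤ c)
    (lam : Measure ℝ) (hlam : lam (Set.Iio (0 : ℝ)) = 0)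
    (hint : Integrable (fun s : ℝ => (1 + s)⁻¹) lam)
    (hrep : ∀ x : ℝ, 0 < x →
      f x = d * (x - 1) + c * (x - 1) ^ 2 + ∫ s, (x - 1) ^ 2 / (x + s) ∂lam)
    (ρ σ : Matrix (Fin n) (Fin n) ℂ) (hρ : ρ.PosSemidef) (hσ : σ.PosSemidef)
    (hρ1 : ρ.trace = 1) (hσ1 : σ.trace = 1) :
    (((c + ∫ s, (1 + s)⁻¹ ∂lam) * traceNorm (ρ - σ) ^ 2 : ℝ) : EReal)
      ≤ sSup {r : EReal | ∃ (k : ℕ) (P : Fin k → Matrix (Fin n) (Fin n) ℂ),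
          IsProjMeas P ∧
          r = ∑ x, persp f (Matrix.trace (ρ * P x)).re (Matrix.trace (σ * P x)).re} := by
  have hnonneg : ∀ᵐ s ∂lam, 0 ≤ s := by
    simpa using measure_eq_zero_iff_ae_notMem.1 hlam
  obtain ⟨k, P, hP, hnorm⟩ := exists_isProjMeas_traceNorm_eq (hρ.isHermitian.sub hσ.isHermitian)
  have hdist : traceNorm (ρ - σ) = ∑ x, |(ρ * P x).trace.re - (σ * P x).trace.re| := by
    simpa only [Matrix.sub_mul, Matrix.trace_sub, Complex.sub_re] using hnorm
  rw [hdist]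
  refine le_trans ?_ (le_sSup ⟨k, P, hP, rfl⟩)
  exact mul_sq_sum_abs_sub_le_sum_persp
    (exists_abs_sub_one_minorant_of_integral_rep hc hnonneg hint hrep)
    (hP.re_trace_mul_nonneg hρ) (hP.re_trace_mul_nonneg hσ)
    (by simp [hP.sum_re_trace_mul, hρ1]) (by simp [hP.sum_re_trace_mul, hσ1])
end

section
/- Let f : (0,∞) → ℝ be operator convex, let Φ : M_n(ℂ) → M_m(ℂ) be a positive linear map, and let ρ, σ ∈ M_n(ℂ) be positive definite such that Φ(ρ) and Φ(σ) are positive definite. Then the operator perspective is monotone under Φ: Φ(σ)^{1/2} f( Φ(σ)^{−1/2} Φ(ρ) Φ(σ)^{−1/2} ) Φ(σ)^{1/2} ≤ Φ( σ^{1/2} f( σ^{−1/2} ρ σ^{−1/2} ) σ^{1/2} ) in the Loewner order, i.e., P_f(Φ(ρ), Φ(σ)) ≤ Φ(P_f(ρ, σ)). -/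
open Matrix
open scoped ComplexOrder

/-- `f : (0,∞) → ℝ` is operator convex. -/
def OperatorConvexOn (f : ℝ → ℝ) : Prop :=
  ∀ (m : ℕ) (A B : Matrix (Fin m) (Fin m) ℂ), A.PosDef → B.PosDef →
    ∀ t : ℝ, 0 ≤ t → t ≤ 1 →
      (t • cfc f A + (1 - t) • cfc f B - cfc f (t • A + (1 - t) • B)).PosSemidef

/-- The operator perspective `P_f(A, B) = B^{1/2} f(B^{-1/2} A B^{-1/2}) B^{1/2}`. -/
noncomputable def perspM {n : ℕ} (f : ℝ → ℝ) (A B : Matrix (Fin n) (Fin n) ℂ) :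
    Matrix (Fin n) (Fin n) ℂ :=
  mpow B (1/2) * cfc f (mpow B (-(1/2)) * A * mpow B (-(1/2))) * mpow B (1/2)

/-!
Conjugating by `σ^{1/2}` and `Φ(σ)^{-1/2}` turns `Φ` into a unital positive map `Ψ`, and the claim
into the Choi–Davis–Jensen inequality `f(Ψ(X)) ≤ Ψ(f(X))` at `X = σ^{-1/2} ρ σ^{-1/2}`. Although `Ψ`
need not be completely positive, only its values on the spectral projections `P i` of `X` matter.
Writing `Ψ(P i) = (B i)ᴴ * B i` reduces the inequality to that of Hansen and Pedersen for a column
`V` of matrices `B i` with `Vᴴ * V = 1`. The latter is midpoint convexity applied to `D` and its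
conjugate under the reflection `2 V Vᴴ - 1`, whose average commutes with `V Vᴴ`.
-/

section FunctionalCalculus

variable {𝕜 ι κ : Type*} [RCLike 𝕜] [Fintype ι] [DecidableEq ι] [Fintype κ] [DecidableEq κ]

lemma aeval_mul_eq_mul_aeval_of_mul_eq {R S : Type*} [CommSemiring R] [CommSemiring S] [Algebra R S]
    {A : Matrix ι ι S} {B : Matrix κ κ S} {Z : Matrix ι κ S} (hZ : A * Z = Z * B)
    (p : Polynomial R) :
    Polynomial.aeval A p * Z = Z * Polynomial.aeval B p := by
  induction p using Polynomial.induction_on' with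
  | add p q hp hq => rw [map_add, map_add, Matrix.add_mul, Matrix.mul_add, hp, hq]
  | monomial k c =>
    have hpow : A ^ k * Z = Z * B ^ k := by
      induction k with
      | zero => simp only [pow_zero, Matrix.one_mul, Matrix.mul_one]
      | succ k ih =>
        rw [pow_succ, pow_succ, Matrix.mul_assoc, hZ, ← Matrix.mul_assoc, ih, Matrix.mul_assoc]
    simp only [Polynomial.aeval_monomial, ← Algebra.smul_def, Matrix.smul_mul, Matrix.mul_smul,
      hpow]

lemma cfc_mul_eq_mul_cfc_of_mul_eq (f : ℝ → ℝ) {A : Matrix ι ι 𝕜} {B : Matrix κ κ 𝕜}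
    (hA : A.IsHermitian) (hB : B.IsHermitian) {Z : Matrix ι κ 𝕜} (hZ : A * Z = Z * B) :
    cfc f A * Z = Z * cfc f B := by
  -- Both spectra are finite, so `f` may be replaced by an interpolating polynomial.
  let s : Finset ℝ := A.finite_real_spectrum.toFinset ∪ B.finite_real_spectrum.toFinset
  let p := Lagrange.interpolate s id f
  have eval_p : ∀ x ∈ s, f x = p.eval x := fun x hx =>
    (Lagrange.eval_interpolate_at_node f Function.injective_id.injOn hx).symm
  have cfc_A : cfc f A = Polynomial.aeval A p := by
    rw [← cfc_polynomial p A hA]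
    exact cfc_congr fun x hx => eval_p x (by simp [s, hx])
  have cfc_B : cfc f B = Polynomial.aeval B p := by
    rw [← cfc_polynomial p B hB]
    exact cfc_congr fun x hx => eval_p x (by simp [s, hx])
  rw [cfc_A, cfc_B, aeval_mul_eq_mul_aeval_of_mul_eq hZ]

lemma cfc_submatrix_equiv (f : ℝ → ℝ) {A : Matrix ι ι 𝕜} (hA : A.IsHermitian) (e : κ ≃ ι) :
    cfc f (A.submatrix e e) = (cfc f A).submatrix e e := by
  let permutation : Matrix κ ι 𝕜 := (1 : Matrix ι ι 𝕜).submatrix e (Equiv.refl ι)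
  have submatrix_mul_permutation (M : Matrix ι ι 𝕜) :
      M.submatrix e e * permutation = permutation * M := by
    rw [mul_submatrix_one, one_submatrix_mul, submatrix_submatrix]
    simp
  have cfc_mul_permutation : cfc f (A.submatrix e e) * permutation =
      (cfc f A).submatrix e e * permutation := by
    rw [submatrix_mul_permutation]
    exact cfc_mul_eq_mul_cfc_of_mul_eq f (hA.submatrix e) hA (submatrix_mul_permutation A)
  rw [mul_submatrix_one, mul_submatrix_one] at cfc_mul_permutation
  ext i j
  simpa using congr_fun₂ cfc_mul_permutation i (e j)

lemma cfc_blockDiagonal (f : ℝ → ℝ) {A : ι → Matrix κ κ 𝕜} (hA : ∀ i, (A i).IsHermitian) :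
    cfc f (blockDiagonal A) = blockDiagonal fun i => cfc f (A i) := by
  let inclusion (i : ι) : Matrix (κ × ι) κ 𝕜 := (1 : Matrix (κ × ι) (κ × ι) 𝕜).submatrix
    (Equiv.refl _) fun a => (a, i)
  have blockDiagonal_mul_inclusion (M : ι → Matrix κ κ 𝕜) (i : ι) :
      blockDiagonal M * inclusion i = inclusion i * M i := by
    ext ⟨a, j⟩ b
    by_cases hji : j = i <;>
      simp [inclusion, Matrix.mul_apply, Matrix.one_apply, blockDiagonal_apply, hji]
  have cfc_mul_inclusion (i : ι) : cfc f (blockDiagonal A) * inclusion i =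
      (blockDiagonal fun i => cfc f (A i)) * inclusion i := by
    rw [blockDiagonal_mul_inclusion]
    exact cfc_mul_eq_mul_cfc_of_mul_eq f (isHermitian_blockDiagonal_iff.mpr hA) (hA i)
      (blockDiagonal_mul_inclusion A i)
  simp only [inclusion, mul_submatrix_one] at cfc_mul_inclusion
  ext p ⟨b, i⟩
  exact congr_fun₂ (cfc_mul_inclusion i) p b

lemma cfc_eq_sum_smul_vecMulVec (f : ℝ → ℝ) {A : Matrix ι ι 𝕜} (hA : A.IsHermitian) :
    cfc f A = ∑ i, f (hA.eigenvalues i) •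
      vecMulVec (hA.eigenvectorBasis i) (star (hA.eigenvectorBasis i : ι → 𝕜)) := by
  ext a b
  rw [hA.cfc_eq, Matrix.IsHermitian.cfc, Unitary.conjStarAlgAut_apply, Matrix.mul_apply,
    Matrix.sum_apply]
  simp only [mul_diagonal, star_apply, IsHermitian.eigenvectorUnitary_apply, Function.comp_apply,
    Matrix.smul_apply, vecMulVec_apply, Pi.star_apply, RCLike.real_smul_eq_coe_mul]
  exact Finset.sum_congr rfl fun i _ => by ring

end FunctionalCalculus

section PositiveMatrices

open scoped MatrixOrder

variable {𝕜 ι κ : Type*} [RCLike 𝕜]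

lemma posDef_blockDiagonal [Finite ι] [DecidableEq ι] [Finite κ] {A : ι → Matrix κ κ 𝕜}
    (hA : ∀ i, (A i).PosDef) : (blockDiagonal A).PosDef := by
  have := Fintype.ofFinite ι
  have := Fintype.ofFinite κ
  refine .of_dotProduct_mulVec_pos (isHermitian_blockDiagonal_iff.mpr fun i => (hA i).1)
    fun x hx => ?_
  have quadratic_form : star x ⬝ᵥ blockDiagonal A *ᵥ x =
      ∑ i, (star fun a => x (a, i)) ⬝ᵥ A i *ᵥ fun a => x (a, i) := by
    simp [dotProduct, mulVec, Fintype.sum_prod_type_right, blockDiagonal_apply,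
      Finset.sum_ite_irrel]
  obtain ⟨⟨a, i⟩, hai⟩ := Function.ne_iff.mp hx
  rw [quadratic_form]
  exact Finset.sum_pos' (fun j _ => (hA j).posSemidef.dotProduct_mulVec_nonneg _)
    ⟨i, Finset.mem_univ i, (hA i).dotProduct_mulVec_pos fun h => hai (congr_fun h a)⟩

lemma conjTranspose_mul_mul_le [Fintype ι] [Finite κ] {A B : Matrix ι ι 𝕜} (h : A ≤ B)
    (V : Matrix ι κ 𝕜) : Vᴴ * A * V ≤ Vᴴ * B * V := by
  rw [Matrix.le_iff] at h ⊢
  simpa only [Matrix.mul_sub, Matrix.sub_mul] using h.conjTranspose_mul_mul_same V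

end PositiveMatrices

section IsometryReflection

variable {𝕜 ι κ : Type*} [RCLike 𝕜] [DecidableEq ι] [Fintype κ]

/-- The reflection `2 V Vᴴ - 1` in the range of an isometry `V` (a rectangular matrix with
`Vᴴ V = 1`). -/
noncomputable def isometryReflection (V : Matrix ι κ 𝕜) : Matrix ι ι 𝕜 := (2 : ℝ) • (V * Vᴴ) - 1

variable {V : Matrix ι κ 𝕜}

lemma isHermitian_isometryReflection : (isometryReflection V).IsHermitian :=
  ((isHermitian_mul_conjTranspose_self V).smul (.all 2)).sub isHermitian_one

variable [Fintype ι] [DecidableEq κ]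

lemma isometryReflection_mul (hV : Vᴴ * V = 1) : isometryReflection V * V = V := by
  rw [isometryReflection, Matrix.sub_mul, Matrix.smul_mul, Matrix.mul_assoc, hV, Matrix.mul_one,
    Matrix.one_mul, two_smul, add_sub_cancel_right]

lemma conjTranspose_mul_isometryReflection (hV : Vᴴ * V = 1) : Vᴴ * isometryReflection V = Vᴴ := by
  simpa only [conjTranspose_mul, isHermitian_isometryReflection.eq] using
    congr_arg conjTranspose (isometryReflection_mul hV)

lemma isometryReflection_mul_self (hV : Vᴴ * V = 1) :
    isometryReflection V * isometryReflection V = 1 := by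
  nth_rw 1 [isometryReflection]
  rw [Matrix.sub_mul, Matrix.smul_mul, Matrix.mul_assoc, conjTranspose_mul_isometryReflection hV,
    Matrix.one_mul, isometryReflection, sub_sub_cancel]

lemma midpoint_isometryReflection_conj_mul (hV : Vᴴ * V = 1) (D : Matrix ι ι 𝕜) :
    ((1 / 2 : ℝ) • D + (1 - 1 / 2 : ℝ) • (isometryReflection V * D * isometryReflection V)) * V =
      V * (Vᴴ * D * V) := by
  have reflected : isometryReflection V * D * isometryReflection V * V =
      (2 : ℝ) • (V * (Vᴴ * D * V)) - D * V := by
    rw [Matrix.mul_assoc, isometryReflection_mul hV, isometryReflection, Matrix.sub_mul,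
      Matrix.sub_mul, Matrix.one_mul]
    simp only [Matrix.mul_assoc, two_smul, Matrix.add_mul]
  rw [Matrix.add_mul, Matrix.smul_mul, Matrix.smul_mul, reflected]
  module

lemma posDef_isometryReflection_conj (hV : Vᴴ * V = 1) {D : Matrix ι ι 𝕜} (hD : D.PosDef) :
    (isometryReflection V * D * isometryReflection V).PosDef := by
  have hS := isometryReflection_mul_self hV
  have h := (Matrix.IsUnit.posDef_star_left_conjugate_iff (.of_mul_eq_one _ hS)).mpr hD
  rwa [star_eq_conjTranspose, isHermitian_isometryReflection.eq] at h

lemma cfc_isometryReflection_conj (f : ℝ → ℝ) (hV : Vᴴ * V = 1) {D : Matrix ι ι 𝕜}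
    (hD : D.IsHermitian) :
    cfc f (isometryReflection V * D * isometryReflection V) =
      isometryReflection V * cfc f D * isometryReflection V := by
  have hS := isometryReflection_mul_self hV
  have hSDS : (isometryReflection V * D * isometryReflection V).IsHermitian := by
    simpa only [isHermitian_isometryReflection.eq] using
      isHermitian_conjTranspose_mul_mul (isometryReflection V) hD
  have h := cfc_mul_eq_mul_cfc_of_mul_eq f hSDS hD (Z := isometryReflection V)
    (by rw [Matrix.mul_assoc, hS, Matrix.mul_one])
  rw [← h, Matrix.mul_assoc (cfc f _), hS, Matrix.mul_one]

end IsometryReflection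

namespace OperatorConvexOn

open scoped MatrixOrder

variable {f : ℝ → ℝ} {ι κ η : Type*} [Fintype ι] [DecidableEq ι] [Fintype κ] [DecidableEq κ]
  [Fintype η]

lemma cfc_le (hf : OperatorConvexOn f) {A B : Matrix ι ι ℂ} (hA : A.PosDef) (hB : B.PosDef)
    {t : ℝ} (ht₀ : 0 ≤ t) (ht₁ : t ≤ 1) :
    cfc f (t • A + (1 - t) • B) ≤ t • cfc f A + (1 - t) • cfc f B := by
  let e := (Fintype.equivFin ι).symm
  have hAB : (t • A + (1 - t) • B).IsHermitian :=
    (hA.1.smul (.all t)).add (hB.1.smul (.all (1 - t)))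
  have h := hf _ _ _ (hA.submatrix e.injective) (hB.submatrix e.injective) t ht₀ ht₁
  have reindex : t • A.submatrix e e + (1 - t) • B.submatrix e e =
      (t • A + (1 - t) • B).submatrix e e := rfl
  rw [reindex, cfc_submatrix_equiv f hA.1, cfc_submatrix_equiv f hB.1,
    cfc_submatrix_equiv f hAB] at h
  exact (posSemidef_submatrix_equiv e).mp h

lemma cfc_isometry_conj_le (hf : OperatorConvexOn f) {V : Matrix ι κ ℂ} (hV : Vᴴ * V = 1)
    {D : Matrix ι ι ℂ} (hD : D.PosDef) : cfc f (Vᴴ * D * V) ≤ Vᴴ * cfc f D * V := by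
  set S := isometryReflection V
  set M := (1 / 2 : ℝ) • D + (1 - 1 / 2 : ℝ) • (S * D * S)
  have hSDS : (S * D * S).PosDef := posDef_isometryReflection_conj hV hD
  have convexity : cfc f M ≤ (1 / 2 : ℝ) • cfc f D + (1 - 1 / 2 : ℝ) • cfc f (S * D * S) :=
    hf.cfc_le hD hSDS (by norm_num) (by norm_num)
  have cfc_midpoint : cfc f M * V = V * cfc f (Vᴴ * D * V) :=
    cfc_mul_eq_mul_cfc_of_mul_eq f ((hD.1.smul (.all _)).add (hSDS.1.smul (.all _)))
      (isHermitian_conjTranspose_mul_mul V hD.1) (midpoint_isometryReflection_conj_mul hV D)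
  have compress_reflected : Vᴴ * cfc f (S * D * S) * V = Vᴴ * cfc f D * V := by
    rw [cfc_isometryReflection_conj f hV hD.1, Matrix.mul_assoc, Matrix.mul_assoc,
      isometryReflection_mul hV, ← Matrix.mul_assoc, ← Matrix.mul_assoc,
      conjTranspose_mul_isometryReflection hV]
  calc cfc f (Vᴴ * D * V)
      = Vᴴ * cfc f M * V := by
        rw [Matrix.mul_assoc Vᴴ (cfc f M), cfc_midpoint, ← Matrix.mul_assoc, hV, Matrix.one_mul]
    _ ≤ Vᴴ * ((1 / 2 : ℝ) • cfc f D + (1 - 1 / 2 : ℝ) • cfc f (S * D * S)) * V :=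
        conjTranspose_mul_mul_le convexity V
    _ = Vᴴ * cfc f D * V := by
        rw [Matrix.mul_add, Matrix.add_mul, Matrix.mul_smul, Matrix.mul_smul, Matrix.smul_mul,
          Matrix.smul_mul, compress_reflected]
        module

lemma cfc_sum_conj_le (hf : OperatorConvexOn f) {A : η → Matrix ι ι ℂ} (hA : ∀ i, (A i).PosDef)
    {B : η → Matrix ι κ ℂ} (hB : ∑ i, (B i)ᴴ * B i = 1) :
    cfc f (∑ i, (B i)ᴴ * A i * B i) ≤ ∑ i, (B i)ᴴ * cfc f (A i) * B i := by
  classical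
  let V : Matrix (ι × η) κ ℂ := Matrix.of fun p j => B p.2 p.1 j
  have compress (C : η → Matrix ι ι ℂ) :
      Vᴴ * blockDiagonal C * V = ∑ i, (B i)ᴴ * C i * B i := by
    ext a b
    simp [V, Matrix.mul_apply, Matrix.sum_apply, Fintype.sum_prod_type_right, blockDiagonal_apply]
  have hV : Vᴴ * V = 1 := by
    simpa only [blockDiagonal_one, Pi.one_apply, Matrix.mul_one, hB] using compress 1
  have h := hf.cfc_isometry_conj_le hV (posDef_blockDiagonal hA)
  rwa [cfc_blockDiagonal f fun i => (hA i).1, compress, compress] at h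

lemma cfc_map_le (hf : OperatorConvexOn f) {Ψ : Matrix ι ι ℂ →ₗ[ℂ] Matrix κ κ ℂ}
    (hΨ : ∀ X, X.PosSemidef → (Ψ X).PosSemidef) (hΨ_one : Ψ 1 = 1)
    {A : Matrix ι ι ℂ} (hA : A.PosDef) : cfc f (Ψ A) ≤ Ψ (cfc f A) := by
  let x := hA.1.eigenvalues
  let P (i : ι) : Matrix ι ι ℂ :=
    vecMulVec (hA.1.eigenvectorBasis i) (star (hA.1.eigenvectorBasis i : ι → ℂ))
  have exists_factor (i : ι) : ∃ B : Matrix κ κ ℂ, Ψ (P i) = Bᴴ * B :=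
    CStarAlgebra.nonneg_iff_eq_star_mul_self.mp
      (hΨ _ (posSemidef_vecMulVec_self_star _)).nonneg
  choose B hB using exists_factor
  have map_cfc (g : ℝ → ℝ) : Ψ (cfc g A) =
      ∑ i, (B i)ᴴ * cfc g (algebraMap ℝ (Matrix κ κ ℂ) (x i)) * B i := by
    rw [cfc_eq_sum_smul_vecMulVec g hA.1, map_sum]
    refine Finset.sum_congr rfl fun i _ => ?_
    rw [cfc_algebraMap, Algebra.algebraMap_eq_smul_one, Matrix.mul_smul, Matrix.smul_mul,
      Matrix.mul_one, ← hB, LinearMap.map_smul_of_tower]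
  have map_self : Ψ A = ∑ i, (B i)ᴴ * algebraMap ℝ (Matrix κ κ ℂ) (x i) * B i := by
    simpa only [cfc_id' ℝ _ hA.1.isSelfAdjoint, cfc_algebraMap] using map_cfc fun t => t
  have sum_factors : ∑ i, (B i)ᴴ * B i = 1 := by
    simpa only [cfc_const_one ℝ _ hA.1.isSelfAdjoint, hΨ_one, cfc_algebraMap, map_one,
      Matrix.mul_one, eq_comm] using map_cfc fun _ => 1
  rw [map_self, map_cfc]
  refine hf.cfc_sum_conj_le (fun i => ?_) sum_factors
  rw [Algebra.algebraMap_eq_smul_one]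
  exact Matrix.PosDef.one.smul (hA.eigenvalues_pos i)

end OperatorConvexOn

section MoorePenrosePower

open scoped MatrixOrder

variable {n : ℕ} {A : Matrix (Fin n) (Fin n) ℂ}

lemma isHermitian_mpow (A : Matrix (Fin n) (Fin n) ℂ) (t : ℝ) : (mpow A t).IsHermitian :=
  cfc_predicate _ A

lemma mpow_mul_mpow (hA : A.PosSemidef) (s t : ℝ) : mpow A s * mpow A t = mpow A (s + t) := by
  unfold mpow
  rw [← cfc_mul _ _ A (A.finite_real_spectrum.continuousOn _)
    (A.finite_real_spectrum.continuousOn _)]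
  refine cfc_congr fun x hx => ?_
  have hx₀ : 0 ≤ x := spectrum_nonneg_of_nonneg hA.nonneg hx
  obtain rfl | hx₀ := hx₀.eq_or_lt
  · simp
  · simp only [hx₀.ne', if_false, Real.rpow_add hx₀]

lemma mpow_one (hA : A.IsHermitian) : mpow A 1 = A := by
  have h : (fun x : ℝ => if x = 0 then 0 else x ^ (1 : ℝ)) = fun x => x := by
    ext x
    split_ifs with hx
    · exact hx.symm
    · exact Real.rpow_one x
  rw [mpow, h, cfc_id' ℝ A hA.isSelfAdjoint]

lemma mpow_zero (hA : A.PosDef) : mpow A 0 = 1 := by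
  rw [mpow, ← cfc_const_one ℝ A hA.1.isSelfAdjoint]
  refine cfc_congr fun x hx => ?_
  have hx₀ : 0 < x := hA.isStrictlyPositive.spectrum_pos hx
  simp only [hx₀.ne', if_false, Real.rpow_zero]

lemma mpow_half_mul_mpow_half (hA : A.PosSemidef) : mpow A (1 / 2) * mpow A (1 / 2) = A := by
  rw [mpow_mul_mpow hA, add_halves, mpow_one hA.1]

lemma mpow_mul_mpow_neg (hA : A.PosDef) (t : ℝ) : mpow A t * mpow A (-t) = 1 := by
  rw [mpow_mul_mpow hA.posSemidef, add_neg_cancel, mpow_zero hA]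

lemma mpow_neg_mul_mpow (hA : A.PosDef) (t : ℝ) : mpow A (-t) * mpow A t = 1 := by
  rw [mpow_mul_mpow hA.posSemidef, neg_add_cancel, mpow_zero hA]

lemma mpow_conj_mpow_neg_conj (hA : A.PosDef) (t : ℝ) (X : Matrix (Fin n) (Fin n) ℂ) :
    mpow A t * (mpow A (-t) * X * mpow A (-t)) * mpow A t = X := by
  rw [← mul_assoc, ← mul_assoc, mpow_mul_mpow_neg hA, one_mul, mul_assoc, mpow_neg_mul_mpow hA,
    mul_one]

lemma posSemidef_mpow_conj {X : Matrix (Fin n) (Fin n) ℂ} (hX : X.PosSemidef)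
    (A : Matrix (Fin n) (Fin n) ℂ) (t : ℝ) :
    (mpow A t * X * mpow A t).PosSemidef := by
  simpa only [(isHermitian_mpow A t).eq] using hX.conjTranspose_mul_mul_same (mpow A t)

lemma posDef_mpow_conj (hA : A.PosDef) {X : Matrix (Fin n) (Fin n) ℂ} (hX : X.PosDef) (t : ℝ) :
    (mpow A t * X * mpow A t).PosDef := by
  have h := (Matrix.IsUnit.posDef_star_left_conjugate_iff
    (.of_mul_eq_one _ (mpow_mul_mpow_neg hA t))).mpr hX
  rwa [star_eq_conjTranspose, (isHermitian_mpow A t).eq] at h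

end MoorePenrosePower

section NormalizedMap

variable {n m : ℕ} (Φ : Matrix (Fin n) (Fin n) ℂ →ₗ[ℂ] Matrix (Fin m) (Fin m) ℂ)
  {σ : Matrix (Fin n) (Fin n) ℂ}

/-- The map `X ↦ Φ(σ)^{-1/2} Φ(σ^{1/2} X σ^{1/2}) Φ(σ)^{-1/2}`, the unital map to
which the Choi–Davis–Jensen inequality is applied. -/
noncomputable def normalizedMap (σ : Matrix (Fin n) (Fin n) ℂ) :
    Matrix (Fin n) (Fin n) ℂ →ₗ[ℂ] Matrix (Fin m) (Fin m) ℂ :=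
  LinearMap.mulLeftRight ℂ (mpow (Φ σ) (-(1 / 2)), mpow (Φ σ) (-(1 / 2))) ∘ₗ Φ ∘ₗ
    LinearMap.mulLeftRight ℂ (mpow σ (1 / 2), mpow σ (1 / 2))

lemma normalizedMap_apply (σ X : Matrix (Fin n) (Fin n) ℂ) :
    normalizedMap Φ σ X =
      mpow (Φ σ) (-(1 / 2)) * Φ (mpow σ (1 / 2) * X * mpow σ (1 / 2)) * mpow (Φ σ) (-(1 / 2)) := by
  simp [normalizedMap]

lemma posSemidef_normalizedMap (hΦ : ∀ X, X.PosSemidef → (Φ X).PosSemidef)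
    (σ X : Matrix (Fin n) (Fin n) ℂ) (hX : X.PosSemidef) : (normalizedMap Φ σ X).PosSemidef := by
  rw [normalizedMap_apply]
  exact posSemidef_mpow_conj (hΦ _ (posSemidef_mpow_conj hX _ _)) _ _

lemma normalizedMap_one (hσ : σ.PosSemidef) (hΦσ : (Φ σ).PosDef) : normalizedMap Φ σ 1 = 1 := by
  rw [normalizedMap_apply, mul_one, mpow_half_mul_mpow_half hσ]
  nth_rw 2 [← mpow_half_mul_mpow_half hΦσ.posSemidef]
  rw [← mul_assoc, mpow_neg_mul_mpow hΦσ, one_mul, mpow_mul_mpow_neg hΦσ]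

lemma normalizedMap_mpow_conj (hσ : σ.PosDef) (ρ : Matrix (Fin n) (Fin n) ℂ) :
    normalizedMap Φ σ (mpow σ (-(1 / 2)) * ρ * mpow σ (-(1 / 2))) =
      mpow (Φ σ) (-(1 / 2)) * Φ ρ * mpow (Φ σ) (-(1 / 2)) := by
  rw [normalizedMap_apply, mpow_conj_mpow_neg_conj hσ]

lemma mpow_conj_normalizedMap (hΦσ : (Φ σ).PosDef) (X : Matrix (Fin n) (Fin n) ℂ) :
    mpow (Φ σ) (1 / 2) * normalizedMap Φ σ X * mpow (Φ σ) (1 / 2) =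
      Φ (mpow σ (1 / 2) * X * mpow σ (1 / 2)) := by
  rw [normalizedMap_apply, mpow_conj_mpow_neg_conj hΦσ]

end NormalizedMap

/-- monotonicity of the operator perspective of an operator convex `f`
under a positive linear map: `P_f(Φ(ρ), Φ(σ)) ≤ Φ(P_f(ρ, σ))` in the Loewner order,
for positive definite `ρ, σ` with `Φ(ρ), Φ(σ)` positive definite. -/
theorem stmt10 {n m : ℕ} (f : ℝ → ℝ) (hf : OperatorConvexOn f)
    (Φ : Matrix (Fin n) (Fin n) ℂ →ₗ[ℂ] Matrix (Fin m) (Fin m) ℂ)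
    (hΦpos : ∀ X, X.PosSemidef → (Φ X).PosSemidef)
    (ρ σ : Matrix (Fin n) (Fin n) ℂ) (hρ : ρ.PosDef) (hσ : σ.PosDef)
    (hΦρ : (Φ ρ).PosDef) (hΦσ : (Φ σ).PosDef) :
    (Φ (perspM f ρ σ) - perspM f (Φ ρ) (Φ σ)).PosSemidef := by
  let Ψ := normalizedMap Φ σ
  let X := mpow σ (-(1 / 2)) * ρ * mpow σ (-(1 / 2))
  have jensen : (Ψ (cfc f X) - cfc f (Ψ X)).PosSemidef :=
    hf.cfc_map_le (posSemidef_normalizedMap Φ hΦpos σ) (normalizedMap_one Φ hσ.posSemidef hΦσ)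
      (posDef_mpow_conj hσ hρ _)
  have map_perspM : Φ (perspM f ρ σ) = mpow (Φ σ) (1 / 2) * Ψ (cfc f X) * mpow (Φ σ) (1 / 2) :=
    (mpow_conj_normalizedMap Φ hΦσ _).symm
  have perspM_map : perspM f (Φ ρ) (Φ σ) =
      mpow (Φ σ) (1 / 2) * cfc f (Ψ X) * mpow (Φ σ) (1 / 2) := by
    rw [normalizedMap_mpow_conj Φ hσ, perspM]
  rw [map_perspM, perspM_map, ← Matrix.sub_mul, ← Matrix.mul_sub]
  exact posSemidef_mpow_conj jensen _ _
end

section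
/- Let Φ : M_n(ℂ) → M_n(ℂ) be a positive, unital, trace-preserving linear map, let X ∈ M_n(ℂ) be Hermitian, and let f be a convex real function on an interval containing all eigenvalues of X (the eigenvalues of Φ(X) then automatically lie in this interval). Then Tr f(Φ(X)) ≤ Tr f(X). Moreover, if f is strictly convex on this interval, then equality Tr f(Φ(X)) = Tr f(X) holds if and only if there exists a unitary U ∈ M_n(ℂ) with Φ(X) = U X Uᴴ. -/
open Matrix
open scoped ComplexOrder

/-!
Diagonalise `X` and `Φ X`. In the two eigenbases, the diagonal-to-diagonal part of `Φ` is a doubly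
stochastic matrix `M` carrying the eigenvalues of `X` to those of `Φ X`: its entries are nonnegative
by positivity, its row sums are `1` by unitality and its column sums are `1` by trace preservation.
Jensen's inequality in each row, summed over the rows, gives the trace inequality.

If equality holds for a strictly convex `f`, then Jensen's inequality is an equality in every row,
so `M i j ≠ 0` forces the `i`-th eigenvalue of `Φ X` to equal the `j`-th eigenvalue of `X`. By
Birkhoff's theorem the support of `M` contains the graph of a permutation, so `X` and `Φ X` have the
same eigenvalues with multiplicity and are therefore unitarily similar.
-/

section DoublyStochastic

variable {R n E β : Type*} [Fintype n] [DecidableEq n]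

lemma sum_sum_smul_of_mem_doublyStochastic [Semiring R] [PartialOrder R] [IsOrderedRing R]
    [AddCommMonoid β] [Module R β] {M : Matrix n n R} (hM : M ∈ doublyStochastic R n) (g : n → β) :
    ∑ i, ∑ j, M i j • g j = ∑ j, g j := by
  rw [Finset.sum_comm]
  simp only [← Finset.sum_smul, sum_col_of_mem_doublyStochastic hM, one_smul]

variable [Field R] [LinearOrder R] [IsStrictOrderedRing R] {M : Matrix n n R}

lemma exists_perm_forall_pos_of_mem_doublyStochastic (hM : M ∈ doublyStochastic R n) :
    ∃ σ : Equiv.Perm n, ∀ i, 0 < M i (σ i) := by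
  obtain ⟨w, w_nonneg, w_sum, rfl⟩ := exists_eq_sum_perm_of_mem_doublyStochastic hM
  obtain ⟨σ, -, w_pos⟩ : ∃ σ ∈ Finset.univ, 0 < w σ :=
    Finset.exists_lt_of_sum_lt (by simp [w_sum])
  refine ⟨σ, fun i ↦ ?_⟩
  rw [Matrix.sum_apply]
  refine Finset.sum_pos' (fun τ _ ↦ ?_) ⟨σ, Finset.mem_univ σ, ?_⟩
  · exact mul_nonneg (w_nonneg τ) (nonneg_of_mem_doublyStochastic permMatrix_mem_doublyStochastic)
  · simpa [Equiv.toPEquiv_apply, PEquiv.toMatrix_apply] using w_pos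

variable [AddCommGroup E] [Module R E] [AddCommGroup β] [PartialOrder β] [IsOrderedAddMonoid β]
  [Module R β] [IsStrictOrderedModule R β] {s : Set E} {f : E → β} {p : n → E}

lemma map_sum_row_le_of_mem_doublyStochastic (hM : M ∈ doublyStochastic R n)
    (hf : ConvexOn R s f) (hp : ∀ j, p j ∈ s) (i : n) :
    f (∑ j, M i j • p j) ≤ ∑ j, M i j • f (p j) :=
  hf.map_sum_le (fun _ _ ↦ nonneg_of_mem_doublyStochastic hM)
    (sum_row_of_mem_doublyStochastic hM i) fun j _ ↦ hp j

lemma sum_map_le_of_mem_doublyStochastic (hM : M ∈ doublyStochastic R n)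
    (hf : ConvexOn R s f) (hp : ∀ j, p j ∈ s) :
    ∑ i, f (∑ j, M i j • p j) ≤ ∑ j, f (p j) :=
  calc
    ∑ i, f (∑ j, M i j • p j) ≤ ∑ i, ∑ j, M i j • f (p j) :=
      Finset.sum_le_sum fun i _ ↦ map_sum_row_le_of_mem_doublyStochastic hM hf hp i
    _ = ∑ j, f (p j) := sum_sum_smul_of_mem_doublyStochastic hM fun j ↦ f (p j)

lemma sum_map_eq_iff_exists_perm_of_mem_doublyStochastic (hM : M ∈ doublyStochastic R n)
    (hf : StrictConvexOn R s f) (hp : ∀ j, p j ∈ s) :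
    ∑ i, f (∑ j, M i j • p j) = ∑ j, f (p j) ↔
      ∃ σ : Equiv.Perm n, ∀ i, ∑ j, M i j • p j = p (σ i) := by
  refine ⟨fun h_eq ↦ ?_, fun ⟨σ, hσ⟩ ↦ ?_⟩
  · rw [← sum_sum_smul_of_mem_doublyStochastic hM fun j ↦ f (p j)] at h_eq
    have jensen_eq (i : n) : f (∑ j, M i j • p j) = ∑ j, M i j • f (p j) :=
      (Finset.sum_eq_sum_iff_of_le fun i _ ↦
        map_sum_row_le_of_mem_doublyStochastic hM hf.convexOn hp i).1 h_eq i (Finset.mem_univ i)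
    obtain ⟨σ, hσ⟩ := exists_perm_forall_pos_of_mem_doublyStochastic hM
    have row_const (i : n) : p (σ i) = ∑ j, M i j • p j :=
      (hf.map_sum_eq_iff' (fun _ _ ↦ nonneg_of_mem_doublyStochastic hM)
        (sum_row_of_mem_doublyStochastic hM i) fun j _ ↦ hp j).1 (jensen_eq i) (σ i)
        (Finset.mem_univ _) (hσ i).ne'
    exact ⟨σ, fun i ↦ (row_const i).symm⟩
  · simp only [hσ]
    exact Equiv.sum_comp σ fun j ↦ f (p j)

end DoublyStochastic

section Hermitian

variable {𝕜 n : Type*} [RCLike 𝕜] [Fintype n] [DecidableEq n] {A B : Matrix n n 𝕜}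

lemma re_trace_cfc_eq_sum_eigenvalues (hA : A.IsHermitian) (f : ℝ → ℝ) :
    RCLike.re (cfc f A).trace = ∑ i, f (hA.eigenvalues i) := by
  rw [hA.cfc_eq, Matrix.IsHermitian.cfc, Unitary.conjStarAlgAut_apply, trace_mul_cycle,
    Unitary.coe_star_mul_self, one_mul, trace_diagonal]
  simp

lemma charpoly_eq_iff_exists_perm_eigenvalues (hA : A.IsHermitian) (hB : B.IsHermitian) :
    A.charpoly = B.charpoly ↔ ∃ σ : Equiv.Perm n, ∀ i, hA.eigenvalues i = hB.eigenvalues (σ i) := by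
  refine ⟨fun h ↦ ⟨1, congrFun ((hA.eigenvalues_eq_eigenvalues_iff hB).2 h)⟩, fun ⟨σ, hσ⟩ ↦ ?_⟩
  simp only [hA.charpoly_eq, hB.charpoly_eq, hσ]
  exact Equiv.prod_comp σ fun i ↦ Polynomial.X - Polynomial.C (hB.eigenvalues i : 𝕜)

lemma charpoly_eq_iff_exists_unitary_conj (hA : A.IsHermitian) (hB : B.IsHermitian) :
    A.charpoly = B.charpoly ↔ ∃ U ∈ unitaryGroup n 𝕜, A = U * B * Uᴴ := by
  refine ⟨fun h ↦ ?_, fun ⟨U, hU, hAB⟩ ↦ ?_⟩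
  · refine ⟨_, (hA.eigenvectorUnitary * star hB.eigenvectorUnitary).2, ?_⟩
    have diagonalizations_eq : Unitary.conjStarAlgAut 𝕜 _ (star hA.eigenvectorUnitary) A =
        Unitary.conjStarAlgAut 𝕜 _ (star hB.eigenvectorUnitary) B := by
      rw [hA.conjStarAlgAut_star_eigenvectorUnitary, hB.conjStarAlgAut_star_eigenvectorUnitary,
        (hA.eigenvalues_eq_eigenvalues_iff hB).2 h]
    rw [← star_eq_conjTranspose, ← Unitary.conjStarAlgAut_apply (S := 𝕜),
      Unitary.conjStarAlgAut_mul_apply, ← diagonalizations_eq, ← Unitary.conjStarAlgAut_mul_apply]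
    simp
  · rw [hAB, charpoly_mul_comm, ← mul_assoc, ← star_eq_conjTranspose, mem_unitaryGroup_iff'.1 hU,
      one_mul]

end Hermitian

section PositiveMap

variable {𝕜 m n F : Type*} [RCLike 𝕜] [Finite n] {A : Matrix n n 𝕜}

open scoped MatrixOrder in
lemma exists_posSemidef_sub_posSemidef_eq (hA : A.IsHermitian) :
    ∃ P Q : Matrix n n 𝕜, P.PosSemidef ∧ Q.PosSemidef ∧ P - Q = A := by
  classical
  cases nonempty_fintype n
  exact ⟨A⁺, A⁻, (CFC.posPart_nonneg A).posSemidef, (CFC.negPart_nonneg A).posSemidef,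
    CFC.posPart_sub_negPart A hA.isSelfAdjoint⟩

lemma isHermitian_map_of_posSemidef_map [FunLike F (Matrix n n 𝕜) (Matrix m m 𝕜)]
    [AddMonoidHomClass F (Matrix n n 𝕜) (Matrix m m 𝕜)] {Φ : F}
    (hΦ : ∀ P : Matrix n n 𝕜, P.PosSemidef → (Φ P).PosSemidef) (hA : A.IsHermitian) :
    (Φ A).IsHermitian := by
  obtain ⟨P, Q, hP, hQ, rfl⟩ := exists_posSemidef_sub_posSemidef_eq hA
  rw [map_sub]
  exact (hΦ P hP).isHermitian.sub (hΦ Q hQ).isHermitian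

end PositiveMap

section Bistochastic

variable {𝕜 n : Type*} [RCLike 𝕜] [Fintype n] [DecidableEq n]

/-- A bistochastic map on square matrices: positive, unital and trace-preserving. Linearity is
required over `ℝ` and trace preservation on positive semidefinite matrices only, which is equivalent
to the usual notion for `ℂ`-linear maps and also covers entrywise complex conjugation. -/
structure IsBistochastic (Φ : Matrix n n 𝕜 →ₗ[ℝ] Matrix n n 𝕜) : Prop where
  posSemidef_map : ∀ X, X.PosSemidef → (Φ X).PosSemidef
  map_one : Φ 1 = 1
  trace_map : ∀ X, X.PosSemidef → (Φ X).trace = X.trace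

/-- The matrix of transition weights between diagonal entries under `Φ`: its `(i, j)` entry is the
`i`-th diagonal entry of the image of the `j`-th diagonal matrix unit. The real part loses nothing
for positive `Φ`. -/
noncomputable def diagTransition (Φ : Matrix n n 𝕜 →ₗ[ℝ] Matrix n n 𝕜) : Matrix n n ℝ :=
  of fun i j ↦ RCLike.re (Φ (diagonal (Pi.single j 1)) i i)

lemma sum_diagTransition_smul (Φ : Matrix n n 𝕜 →ₗ[ℝ] Matrix n n 𝕜) (d : n → ℝ) (i : n) :
    ∑ j, diagTransition Φ i j • d j = RCLike.re (Φ (diagonal (RCLike.ofReal ∘ d)) i i) := by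
  have diagonal_eq : diagonal (RCLike.ofReal ∘ d : n → 𝕜) =
      ∑ j, d j • diagonal (Pi.single j (1 : 𝕜)) := by
    ext a b
    by_cases h : a = b <;>
      simp [h, Matrix.sum_apply, Pi.single_apply, RCLike.real_smul_eq_coe_mul]
  simp only [diagonal_eq, map_sum, map_smul, Matrix.sum_apply, Matrix.smul_apply, RCLike.smul_re,
    diagTransition, of_apply, smul_eq_mul, mul_comm]

lemma isBistochastic_conjStarAlgAut (U : unitaryGroup n 𝕜) :
    IsBistochastic (Unitary.conjStarAlgAut ℝ (Matrix n n 𝕜) U).toAlgEquiv.toLinearMap where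
  posSemidef_map X hX := hX.mul_mul_conjTranspose_same (U : Matrix n n 𝕜)
  map_one := map_one (Unitary.conjStarAlgAut ℝ (Matrix n n 𝕜) U)
  trace_map X _ := by
    change (U * X * star (U : Matrix n n 𝕜)).trace = X.trace
    rw [trace_mul_cycle, Unitary.coe_star_mul_self, one_mul]

namespace IsBistochastic

variable {Φ Ψ : Matrix n n 𝕜 →ₗ[ℝ] Matrix n n 𝕜} {X : Matrix n n 𝕜}

lemma comp (hΦ : IsBistochastic Φ) (hΨ : IsBistochastic Ψ) : IsBistochastic (Φ ∘ₗ Ψ) where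
  posSemidef_map X hX := hΦ.posSemidef_map _ (hΨ.posSemidef_map X hX)
  map_one := by rw [LinearMap.comp_apply, hΨ.map_one, hΦ.map_one]
  trace_map X hX := (hΦ.trace_map _ (hΨ.posSemidef_map X hX)).trans (hΨ.trace_map X hX)

lemma isHermitian_map (hΦ : IsBistochastic Φ) (hX : X.IsHermitian) : (Φ X).IsHermitian :=
  isHermitian_map_of_posSemidef_map hΦ.posSemidef_map hX

lemma diagTransition_mem_doublyStochastic (hΦ : IsBistochastic Φ) :
    diagTransition Φ ∈ doublyStochastic ℝ n := by
  have single_posSemidef (j : n) : (diagonal (Pi.single j (1 : 𝕜))).PosSemidef :=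
    .diagonal (Pi.single_nonneg.2 zero_le_one)
  refine mem_doublyStochastic_iff_sum.2 ⟨fun i j ↦ ?_, fun i ↦ ?_, fun j ↦ ?_⟩
  · exact (RCLike.nonneg_iff.1 (hΦ.posSemidef_map _ (single_posSemidef j)).diag_nonneg).1
  · have row_sum := sum_diagTransition_smul Φ 1 i
    have diagonal_ofReal_one : diagonal (RCLike.ofReal ∘ (1 : n → ℝ)) = (1 : Matrix n n 𝕜) := by
      simp [← diagonal_one, Function.comp_def]
    simpa [diagonal_ofReal_one, hΦ.map_one] using row_sum
  · calc
      ∑ i, diagTransition Φ i j = RCLike.re (Φ (diagonal (Pi.single j 1))).trace := by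
        simp only [diagTransition, of_apply, trace, diag_apply, map_sum]
      _ = 1 := by simp [hΦ.trace_map _ (single_posSemidef j), trace_diagonal]

lemma exists_doublyStochastic_eigenvalues (hΦ : IsBistochastic Φ) (hX : X.IsHermitian) :
    ∃ M ∈ doublyStochastic ℝ n,
      ∀ i, (hΦ.isHermitian_map hX).eigenvalues i = ∑ j, M i j • hX.eigenvalues j := by
  set hΦX := hΦ.isHermitian_map hX
  set V := hX.eigenvectorUnitary
  set W := hΦX.eigenvectorUnitary
  set Ψ : Matrix n n 𝕜 →ₗ[ℝ] Matrix n n 𝕜 :=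
    (Unitary.conjStarAlgAut ℝ _ (star W)).toAlgEquiv.toLinearMap ∘ₗ Φ ∘ₗ
      (Unitary.conjStarAlgAut ℝ _ V).toAlgEquiv.toLinearMap
  have hΨ : IsBistochastic Ψ :=
    (isBistochastic_conjStarAlgAut _).comp (hΦ.comp (isBistochastic_conjStarAlgAut V))
  have Ψ_diagonal : Ψ (diagonal (RCLike.ofReal ∘ hX.eigenvalues)) =
      diagonal (RCLike.ofReal ∘ hΦX.eigenvalues) :=
    calc
      _ = Unitary.conjStarAlgAut 𝕜 _ (star W) (Φ X) := by
        conv_rhs => rw [hX.spectral_theorem]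
        rfl
      _ = _ := hΦX.conjStarAlgAut_star_eigenvectorUnitary
  refine ⟨diagTransition Ψ, hΨ.diagTransition_mem_doublyStochastic, fun i ↦ ?_⟩
  rw [sum_diagTransition_smul, Ψ_diagonal, diagonal_apply_eq, Function.comp_apply, RCLike.ofReal_re]

variable {s : Set ℝ} {f : ℝ → ℝ}

theorem re_trace_cfc_map_le (hΦ : IsBistochastic Φ) (hX : X.IsHermitian)
    (hspec : spectrum ℝ X ⊆ s) (hf : ConvexOn ℝ s f) :
    RCLike.re (cfc f (Φ X)).trace ≤ RCLike.re (cfc f X).trace := by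
  obtain ⟨M, hM, hMX⟩ := hΦ.exists_doublyStochastic_eigenvalues hX
  rw [re_trace_cfc_eq_sum_eigenvalues (hΦ.isHermitian_map hX), re_trace_cfc_eq_sum_eigenvalues hX]
  simp only [hMX]
  exact sum_map_le_of_mem_doublyStochastic hM hf
    fun j ↦ hspec (hX.eigenvalues_mem_spectrum_real j)

theorem re_trace_cfc_map_eq_iff (hΦ : IsBistochastic Φ) (hX : X.IsHermitian)
    (hspec : spectrum ℝ X ⊆ s) (hf : StrictConvexOn ℝ s f) :
    RCLike.re (cfc f (Φ X)).trace = RCLike.re (cfc f X).trace ↔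
      ∃ U ∈ unitaryGroup n 𝕜, Φ X = U * X * Uᴴ := by
  obtain ⟨M, hM, hMX⟩ := hΦ.exists_doublyStochastic_eigenvalues hX
  have hΦX := hΦ.isHermitian_map hX
  rw [← charpoly_eq_iff_exists_unitary_conj hΦX hX, charpoly_eq_iff_exists_perm_eigenvalues hΦX hX,
    re_trace_cfc_eq_sum_eigenvalues hΦX, re_trace_cfc_eq_sum_eigenvalues hX]
  simp only [hMX]
  exact sum_map_eq_iff_exists_perm_of_mem_doublyStochastic hM hf
    fun j ↦ hspec (hX.eigenvalues_mem_spectrum_real j)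

end IsBistochastic

theorem stmt16_general {Φ : Matrix n n 𝕜 →ₗ[ℝ] Matrix n n 𝕜} (hΦ : IsBistochastic Φ)
    {X : Matrix n n 𝕜} (hX : X.IsHermitian) {s : Set ℝ} (hspec : spectrum ℝ X ⊆ s)
    {f : ℝ → ℝ} (hf : ConvexOn ℝ s f) :
    RCLike.re (cfc f (Φ X)).trace ≤ RCLike.re (cfc f X).trace ∧
      (StrictConvexOn ℝ s f →
        (RCLike.re (cfc f (Φ X)).trace = RCLike.re (cfc f X).trace ↔
          ∃ U ∈ unitaryGroup n 𝕜, Φ X = U * X * Uᴴ)) :=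
  ⟨hΦ.re_trace_cfc_map_le hX hspec hf, hΦ.re_trace_cfc_map_eq_iff hX hspec⟩

end Bistochastic

/-- for a positive unital trace-preserving (bistochastic) map `Φ`, a
Hermitian `X`, and `f` convex on a convex set (interval) `s ⊆ ℝ` containing the
eigenvalues of `X`, we have `Tr f(Φ(X)) ≤ Tr f(X)`; if moreover `f` is strictly convex
on `s`, equality holds iff `Φ(X) = U X Uᴴ` for some unitary `U`. -/
theorem stmt16 {n : ℕ}
    (Φ : Matrix (Fin n) (Fin n) ℂ →ₗ[ℂ] Matrix (Fin n) (Fin n) ℂ)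
    (hΦpos : ∀ X, X.PosSemidef → (Φ X).PosSemidef)
    (hΦunital : Φ 1 = 1) (hΦtr : ∀ X, (Φ X).trace = X.trace)
    (X : Matrix (Fin n) (Fin n) ℂ) (hX : X.IsHermitian)
    (s : Set ℝ) (hs : Convex ℝ s) (hspec : spectrum ℝ X ⊆ s)
    (f : ℝ → ℝ) (hf : ConvexOn ℝ s f) :
    (Matrix.trace (cfc f (Φ X))).re ≤ (Matrix.trace (cfc f X)).re ∧
      (StrictConvexOn ℝ s f →
        ((Matrix.trace (cfc f (Φ X))).re = (Matrix.trace (cfc f X)).re ↔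
          ∃ U : Matrix (Fin n) (Fin n) ℂ, U ∈ Matrix.unitaryGroup (Fin n) ℂ ∧
            Φ X = U * X * Uᴴ)) := by
  exact stmt16_general (Φ := Φ.restrictScalars ℝ) ⟨hΦpos, hΦunital, fun Y _ ↦ hΦtr Y⟩ hX hspec hf
end
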